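/- arXiv:1310.7738 — 4 statements merged into one kernel-verified Lean document; each statement's English description precedes it below -/
import Mathlib

section
/- (Classification Theorem) Let V be an arbitrary k-vector space and let f, g be endomorphisms of V each admitting an annihilating polynomial. Then there exists an automorphism τ of V with g = τ f τ^{-1} if and only if: (1) a_g(x) = a_f(x) = p_1(x)^{n_1} ⋯ p_r(x)^{n_r}, the p_j(x) being distinct monic irreducible polynomials in k[x]; and (2) ν_i(V, p_j(f)) = ν_i(V, p_j(g)) for all 1 ≤ j ≤ r and 1 ≤ i ≤ n_j. -/
open Polynomial Module

universe u v w

section Preamble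

variable {k : Type u} [Field k] {V : Type v} [AddCommGroup V] [Module k V]

/-- `Ker p(f)^i`, as a `k[X]`-submodule of `V` viewed as a `k[X]`-module via `f`
(i.e. of the type synonym `Module.AEval' f`, on which `q(x) • v = q(f)(v)`). -/
noncomputable def kerP (f : Module.End k V) (p : k[X]) (i : ℕ) :
    Submodule k[X] (Module.AEval' f) :=
  Submodule.torsionBy k[X] (Module.AEval' f) (p ^ i)

/-- `W_i = Ker p(f)^{i-1} + p(f)(Ker p(f)^{i+1})`, as a `k[X]`-submodule. -/
noncomputable def wSub (f : Module.End k V) (p : k[X]) (i : ℕ) :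
    Submodule k[X] (Module.AEval' f) :=
  kerP f p (i - 1) ⊔ (kerP f p (i + 1)).map (LinearMap.lsmul k[X] (Module.AEval' f) p)

/-- The quotient `Ker p(f)^i / (Ker p(f)^{i-1} + p(f)(Ker p(f)^{i+1}))`, as a `k[X]`-module. -/
abbrev Qmod (f : Module.End k V) (p : k[X]) (i : ℕ) : Type v :=
  kerP f p i ⧸ (wSub f p i).comap (kerP f p i).subtype

theorem qmod_isTorsionBy (f : Module.End k V) (p : k[X]) (i : ℕ) :
    Module.IsTorsionBy k[X] (Qmod f p i) p := by
  intro x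
  obtain ⟨⟨v, hv⟩, rfl⟩ := Submodule.Quotient.mk_surjective _ x
  rw [← Submodule.Quotient.mk_smul, Submodule.Quotient.mk_eq_zero]
  refine Submodule.mem_comap.mpr (Submodule.mem_sup_right ?_)
  refine Submodule.mem_map.mpr ⟨v, ?_, by simp⟩
  rw [kerP, Submodule.mem_torsionBy_iff] at hv ⊢
  rw [pow_succ', mul_smul, hv, smul_zero]

/-- The `K = k[x]/(p(x))`-vector space structure on
`Ker p(f)^i / (Ker p(f)^{i-1} + p(f)(Ker p(f)^{i+1}))`, induced by the `k[x]`-module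
structure `q(x) • v = q(f)(v)`. -/
noncomputable instance qmodModule (f : Module.End k V) (p : k[X]) (i : ℕ) :
    Module (k[X] ⧸ Ideal.span {p}) (Qmod f p i) :=
  (qmod_isTorsionBy f p i).module

/-- The invariant `ν_i(V, p(f))`: the dimension of
`Ker p(f)^i / (Ker p(f)^{i-1} + p(f)(Ker p(f)^{i+1}))` as a vector space over
`K = k[x]/(p(x))`. -/
noncomputable def nu (f : Module.End k V) (p : k[X]) (i : ℕ) : Cardinal.{v} :=
  Module.rank (k[X] ⧸ Ideal.span {p}) (Qmod f p i)

end Preamble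

section Aux
variable {R : Type*} [CommRing R] {M : Type*} [AddCommGroup M] [Module R M]

theorem aux_exists_smul (p : R) {B : Type*} (d : B →₀ R) (h : ∀ a, p ∣ d a) :
    ∃ d' : B →₀ R, d = p • d' := by
  classical
  choose q hq using h
  refine ⟨Finsupp.onFinset d.support (fun a => if d a = 0 then 0 else q a) ?_, ?_⟩
  · intro a ha
    rw [Finsupp.mem_support_iff]
    intro h0
    simp [h0] at ha
  · ext a
    simp only [Finsupp.smul_apply, Finsupp.onFinset_apply, smul_eq_mul]
    split_ifs with h0
    · simp [h0]
    · exact hq a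

/-- `v` is a lift of a basis of the `i`-th quotient (level `i + 1`). -/
structure IsLift (p : R) (i : ℕ) {B : Type*} (v : B → M) : Prop where
  tors : ∀ a, p ^ (i + 1) • v a = 0
  span : ∀ x : M, p ^ (i + 1) • x = 0 → ∃ (c : B →₀ R) (y z : M), p ^ i • y = 0 ∧
    p ^ (i + 2) • z = 0 ∧ x = Finsupp.linearCombination R v c + y + p • z
  indep : ∀ (c : B →₀ R) (y z : M), p ^ i • y = 0 → p ^ (i + 2) • z = 0 →
    Finsupp.linearCombination R v c = y + p • z → ∀ a, p ∣ c a

theorem IsLift.lc_tors {p : R} {i : ℕ} {B : Type*} {v : B → M} (h : IsLift p i v)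
    (c : B →₀ R) : p ^ (i + 1) • Finsupp.linearCombination R v c = 0 := by
  rw [Finsupp.linearCombination_apply, Finsupp.sum, Finset.smul_sum]
  refine Finset.sum_eq_zero fun a _ => ?_
  rw [smul_comm, h.tors, smul_zero]

theorem aux_pow_mono {p : R} {i j : ℕ} (h : i ≤ j) {x : M} (hx : p ^ i • x = 0) :
    p ^ j • x = 0 := by
  obtain ⟨l, rfl⟩ := Nat.exists_eq_add_of_le h
  rw [add_comm, pow_add, mul_smul, hx, smul_zero]

variable {n : ℕ} {B : Fin n → Type*}

noncomputable def auxPhi (v : ∀ i, B i → M) : ((i : Fin n) → (B i →₀ R)) →ₗ[R] M :=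
  ∑ i, Finsupp.linearCombination R (v i) ∘ₗ LinearMap.proj i

theorem auxPhi_apply (v : ∀ i, B i → M) (c : (i : Fin n) → (B i →₀ R)) :
    auxPhi v c = ∑ i, Finsupp.linearCombination R (v i) (c i) := by
  simp [auxPhi]

theorem aux_split (F : Fin n → M) (i : Fin n) :
    ∑ j, F j = (∑ j, if j < i then F j else 0) + F i + ∑ j, if i < j then F j else 0 := by
  have : F i = ∑ j, if j = i then F j else 0 := by simp
  rw [this, ← Finset.sum_add_distrib, ← Finset.sum_add_distrib]
  refine Finset.sum_congr rfl fun j _ => ?_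
  rcases lt_trichotomy j i with h | h | h
  · simp [h, h.ne, h.not_gt]
  · simp [h]
  · simp [h, h.ne', h.not_gt]

theorem aux_lemma1 {p : R} (v : ∀ i, B i → M) (hv : ∀ i : Fin n, IsLift p i (v i))
    (t : ℕ) (c : (i : Fin n) → (B i →₀ R)) (hc : p ^ t • auxPhi v c = 0) :
    ∀ m : ℕ, ∀ i : Fin n, n ≤ i + m → t ≤ i → ∀ a, p ∣ c i a := by
  intro m
  induction m with
  | zero => intro i hi; omega
  | succ m ih =>
    intro i hi hti
    have h1 : ∀ j, i < j → ∃ d' : B j →₀ R, c j = p • d' := fun j hj =>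
      aux_exists_smul p (c j) (ih j (by have : (i : ℕ) < j := hj
                                        omega) (by have : (i : ℕ) < j := hj
                                                   omega))
    choose! d hd using h1
    set F : Fin n → M := fun j => Finsupp.linearCombination R (v j) (c j) with hF
    have hsum := aux_split F i
    rw [← auxPhi_apply v c] at hsum
    set Y := ∑ j, if j < i then F j else 0 with hY
    set z := ∑ j, if i < j then Finsupp.linearCombination R (v j) (d j) else 0 with hz
    have hpz : (∑ j, if i < j then F j else 0) = p • z := by
      rw [hz, Finset.smul_sum]
      refine Finset.sum_congr rfl fun j _ => ?_
      split_ifs with h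
      · rw [hF]; simp only; rw [hd j h, map_smul]
      · simp
    have hYt : p ^ (i : ℕ) • Y = 0 := by
      rw [hY, Finset.smul_sum]
      refine Finset.sum_eq_zero fun j _ => ?_
      split_ifs with h
      · exact aux_pow_mono (Nat.succ_le_of_lt h) ((hv j).lc_tors _)
      · simp
    rw [hpz] at hsum
    have hphi : p ^ (i : ℕ) • auxPhi v c = 0 := aux_pow_mono hti hc
    refine (hv i).indep (c i) (auxPhi v c - Y) (-z) ?_ ?_ ?_
    · rw [smul_sub, hphi, hYt, sub_zero]
    · rw [smul_neg, neg_eq_zero, pow_succ, mul_smul]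
      have : p • z = auxPhi v c - Y - F i := by rw [hsum]; abel
      rw [this, smul_sub, smul_sub, aux_pow_mono (Nat.le_succ _) hphi,
        aux_pow_mono (Nat.le_succ _) hYt, (hv i).lc_tors]
      simp
    · change F i = _
      rw [hsum, smul_neg]; abel

theorem aux_lemma2 {p : R} (v : ∀ i, B i → M)
    (hv : ∀ i : Fin n, IsLift p i (v i)) (s : ℕ) :
    ∀ (t : ℕ) (c : (i : Fin n) → (B i →₀ R)), p ^ t • auxPhi v c = 0 →
    ∀ i : Fin n, t + s ≤ i + 1 → ∀ a, p ^ s ∣ c i a := by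
  induction s with
  | zero => intros; simp
  | succ s ih =>
    intro t c hc i hi a
    have h1 : ∀ j : Fin n, t ≤ j → ∃ d' : B j →₀ R, c j = p • d' := fun j hj =>
      aux_exists_smul p (c j) (aux_lemma1 v hv t c hc n j (by omega) hj)
    choose! d hd using h1
    have hti : t ≤ i := by omega
    let d' : (i : Fin n) → (B i →₀ R) := fun j => if t ≤ j then d j else 0
    have := ih (t + 1) d' ?_ i (by omega) a
    · simp only [d', hti, if_true] at this
      rw [hd i hti, pow_succ', Finsupp.smul_apply, smul_eq_mul]
      exact mul_dvd_mul_left p this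
    · have e : p • auxPhi v d' = auxPhi v c -
          ∑ j : Fin n, if t ≤ j then 0 else Finsupp.linearCombination R (v j) (c j) := by
        rw [auxPhi_apply, auxPhi_apply, ← Finset.sum_sub_distrib, Finset.smul_sum]
        refine Finset.sum_congr rfl fun j _ => ?_
        by_cases h : t ≤ j
        · simp only [d', h, if_true, sub_zero]
          conv_rhs => rw [hd j h, map_smul]
        · simp [d', h]
      rw [pow_succ, mul_smul, e, smul_sub, hc, zero_sub, neg_eq_zero, Finset.smul_sum]
      refine Finset.sum_eq_zero fun j _ => ?_
      split_ifs with h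
      · simp
      · exact aux_pow_mono (by omega) ((hv j).lc_tors _)

theorem aux_ker {p : R} (v : ∀ i, B i → M)
    (hv : ∀ i : Fin n, IsLift p i (v i)) (c : (i : Fin n) → (B i →₀ R)) :
    auxPhi v c = 0 ↔ ∀ i : Fin n, ∀ a, p ^ ((i : ℕ) + 1) ∣ c i a := by
  constructor
  · intro h i a
    exact aux_lemma2 v hv (i + 1) 0 c (by simp [h]) i (by omega) a
  · intro h
    rw [auxPhi_apply]
    refine Finset.sum_eq_zero fun j _ => ?_
    obtain ⟨d, hd⟩ := aux_exists_smul _ (c j) (h j)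
    rw [hd, map_smul, (hv j).lc_tors]

theorem aux_desc {p : R} (v : ∀ i, B i → M)
    (hv : ∀ i : Fin n, IsLift p i (v i)) (hn : ∀ x : M, p ^ (n + 1) • x = 0 → p ^ n • x = 0)
    (m : ℕ) : ∀ i : ℕ, i < n → n ≤ i + m → ∀ x : M, p ^ (i + 1) • x = 0 →
      ∃ c : (i : Fin n) → (B i →₀ R), p ^ i • (x - auxPhi v c) = 0 := by
  induction m with
  | zero => intro i hi; omega
  | succ m ih =>
    intro i hi hin x hx
    obtain ⟨c, y, z, hy, hz, rfl⟩ := (hv ⟨i, hi⟩).span x hx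
    simp only at hy hz
    have key : ∃ d : (i : Fin n) → (B i →₀ R), p ^ (i + 1) • (z - auxPhi v d) = 0 := by
      rcases Nat.lt_or_ge (i + 1) n with h | h
      · exact ih (i + 1) h (by omega) z hz
      · have : n = i + 1 := by omega
        subst this
        exact ⟨0, by simpa using hn z hz⟩
    obtain ⟨d, hd⟩ := key
    refine ⟨Pi.single ⟨i, hi⟩ c + p • d, ?_⟩
    have e1 : auxPhi v (Pi.single (⟨i, hi⟩ : Fin n) c) =
        Finsupp.linearCombination R (v ⟨i, hi⟩) c := by
      rw [auxPhi_apply, Finset.sum_eq_single (⟨i, hi⟩ : Fin n)]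
      · simp
      · intro j _ hj
        simp [Pi.single_eq_of_ne hj]
      · simp
    rw [map_add, e1, map_smul]
    have : Finsupp.linearCombination R (v ⟨i, hi⟩) c + y + p • z -
      (Finsupp.linearCombination R (v ⟨i, hi⟩) c + p • auxPhi v d) =
        y + p • (z - auxPhi v d) := by rw [smul_sub]; abel
    rw [this, smul_add, hy, ← mul_smul, ← pow_succ, hd, add_zero]

theorem aux_range {p : R} (v : ∀ i, B i → M)
    (hv : ∀ i : Fin n, IsLift p i (v i)) (hn : ∀ x : M, p ^ (n + 1) • x = 0 → p ^ n • x = 0) :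
    LinearMap.range (auxPhi (R := R) v) = Submodule.torsionBy R M (p ^ n) := by
  apply le_antisymm
  · rintro _ ⟨c, rfl⟩
    rw [Submodule.mem_torsionBy_iff, auxPhi_apply, Finset.smul_sum]
    exact Finset.sum_eq_zero fun j _ => aux_pow_mono (by omega) ((hv j).lc_tors _)
  · have : ∀ m ≤ n, ∀ x : M, p ^ m • x = 0 → x ∈ LinearMap.range (auxPhi (R := R) v) := by
      intro m
      induction m with
      | zero => intro _ x hx; simp at hx; simp [hx]
      | succ m ih =>
        intro hm x hx
        obtain ⟨c, hc⟩ := aux_desc v hv hn n m (by omega) (by omega) x hx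
        have := ih (by omega) _ hc
        simpa using Submodule.add_mem _ this (LinearMap.mem_range_self (auxPhi v) c)
    intro x hx
    exact this n le_rfl x ((Submodule.mem_torsionBy_iff _ _).1 hx)

theorem aux_equiv {N : Type*} [AddCommGroup N] [Module R N] {p : R} (v : ∀ i, B i → M)
    (hv : ∀ i : Fin n, IsLift p i (v i)) (hn : ∀ x : M, p ^ (n + 1) • x = 0 → p ^ n • x = 0)
    (w : ∀ i, B i → N)
    (hw : ∀ i : Fin n, IsLift p i (w i)) (hn' : ∀ x : N, p ^ (n + 1) • x = 0 → p ^ n • x = 0) :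
    Nonempty (Submodule.torsionBy R M (p ^ n) ≃ₗ[R] Submodule.torsionBy R N (p ^ n)) := by
  have hk : LinearMap.ker (auxPhi (R := R) v) = LinearMap.ker (auxPhi (R := R) w) := by
    ext c
    rw [LinearMap.mem_ker, LinearMap.mem_ker, aux_ker v hv, aux_ker w hw]
  exact ⟨(LinearEquiv.ofEq _ _ (aux_range v hv hn)).symm ≪≫ₗ
    (LinearMap.quotKerEquivRange _).symm ≪≫ₗ Submodule.quotEquivOfEq _ _ hk ≪≫ₗ
    LinearMap.quotKerEquivRange _ ≪≫ₗ LinearEquiv.ofEq _ _ (aux_range w hw hn')⟩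

end Aux

section Bridge
variable {k : Type u} [Field k] {V : Type v} [AddCommGroup V] [Module k V]

theorem aux_mem_w (f : Module.End k V) (p : k[X]) (i : ℕ) (x : kerP f p (i + 1)) :
    (Submodule.Quotient.mk x : Qmod f p (i + 1)) = 0 ↔
      ∃ y z : Module.AEval' f, p ^ i • y = 0 ∧ p ^ (i + 2) • z = 0 ∧ (x : Module.AEval' f) = y + p • z := by
  rw [Submodule.Quotient.mk_eq_zero, Submodule.mem_comap, wSub, Submodule.mem_sup]
  constructor
  · rintro ⟨y, hy, w, hw, h⟩
    obtain ⟨z, hz, rfl⟩ := Submodule.mem_map.1 hw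
    refine ⟨y, z, (Submodule.mem_torsionBy_iff _ _).1 hy, (Submodule.mem_torsionBy_iff _ _).1 hz, ?_⟩
    exact h.symm
  · rintro ⟨y, z, hy, hz, h⟩
    exact ⟨y, (Submodule.mem_torsionBy_iff _ _).2 hy, p • z,
      Submodule.mem_map.2 ⟨z, (Submodule.mem_torsionBy_iff _ _).2 hz, rfl⟩, h.symm⟩

theorem aux_mk_smul (f : Module.End k V) (p : k[X]) (i : ℕ) (c : k[X]) (x : Qmod f p i) :
    (Ideal.Quotient.mk (Ideal.span {p}) c) • x = c • x :=
  (qmod_isTorsionBy f p i).mk_smul c x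

theorem aux_lift (f : Module.End k V) (p : k[X]) (i : ℕ) {B : Type*}
    (b : Basis B (k[X] ⧸ Ideal.span {p}) (Qmod f p (i + 1))) :
    ∃ v : B → Module.AEval' f, IsLift p i v := by
  have h : ∀ a, ∃ x : kerP f p (i + 1), (Submodule.Quotient.mk x : Qmod f p (i + 1)) = b a :=
    fun a => Submodule.Quotient.mk_surjective _ (b a)
  choose x hx using h
  have hlc : ∀ c : B →₀ k[X], ((Finsupp.linearCombination k[X] x c : kerP f p (i + 1)) :
      Module.AEval' f) = Finsupp.linearCombination k[X] (fun a => (x a : Module.AEval' f)) c := by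
    intro c
    exact Finsupp.apply_linearCombination k[X] (kerP f p (i + 1)).subtype x c
  have hq : ∀ c : B →₀ k[X], (Submodule.Quotient.mk (Finsupp.linearCombination k[X] x c) :
      Qmod f p (i + 1)) = Finsupp.linearCombination (k[X] ⧸ Ideal.span {p}) b
        (c.mapRange (Ideal.Quotient.mk (Ideal.span {p})) (map_zero _)) := by
    intro c
    induction c using Finsupp.induction_linear with
    | zero => simp
    | add c d hc hd =>
      rw [map_add, Submodule.Quotient.mk_add, hc, hd, Finsupp.mapRange_add (map_add _), map_add]
    | single a r =>
      rw [Finsupp.mapRange_single, Finsupp.linearCombination_single,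
        Finsupp.linearCombination_single, aux_mk_smul, Submodule.Quotient.mk_smul, hx]
  refine ⟨fun a => x a, ⟨fun a => (Submodule.mem_torsionBy_iff _ _).1 (x a).2, ?_, ?_⟩⟩
  · intro w hw
    let w' : kerP f p (i + 1) := ⟨w, (Submodule.mem_torsionBy_iff _ _).2 hw⟩
    obtain ⟨c, hc⟩ := Finsupp.mapRange_surjective (α := B) (Ideal.Quotient.mk (Ideal.span {p}))
      (map_zero _) Ideal.Quotient.mk_surjective (b.repr (Submodule.Quotient.mk w'))
    have h0 : (Submodule.Quotient.mk (w' - Finsupp.linearCombination k[X] x c) :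
        Qmod f p (i + 1)) = 0 := by
      rw [Submodule.Quotient.mk_sub, hq, hc, b.linearCombination_repr, sub_self]
    obtain ⟨y, z, hy, hz, h⟩ := (aux_mem_w f p i _).1 h0
    refine ⟨c, y, z, hy, hz, ?_⟩
    rw [← hlc, add_assoc, ← h]
    simp [w']
  · intro c y z hy hz h a
    rw [← hlc] at h
    have h0 := (aux_mem_w f p i _).2 ⟨y, z, hy, hz, h⟩
    rw [hq] at h0
    have := (linearIndependent_iff.1 b.linearIndependent) _ h0
    have := DFunLike.congr_fun this a
    rw [Finsupp.mapRange_apply, Finsupp.zero_apply, Ideal.Quotient.eq_zero_iff_mem,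
      Ideal.mem_span_singleton] at this
    exact this

theorem aux_torsion_equiv (f g : Module.End k V) (p : k[X]) (hp : Irreducible p) (n : ℕ)
    (hn : ∀ x : Module.AEval' f, p ^ (n + 1) • x = 0 → p ^ n • x = 0)
    (hn' : ∀ x : Module.AEval' g, p ^ (n + 1) • x = 0 → p ^ n • x = 0)
    (hnu : ∀ i, 1 ≤ i → i ≤ n → nu f p i = nu g p i) :
    Nonempty (Submodule.torsionBy k[X] (Module.AEval' f) (p ^ n) ≃ₗ[k[X]]
      Submodule.torsionBy k[X] (Module.AEval' g) (p ^ n)) := by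
  haveI : (Ideal.span {p}).IsMaximal := PrincipalIdealRing.isMaximal_of_irreducible hp
  letI : Field (k[X] ⧸ Ideal.span {p}) := Ideal.Quotient.field _
  have h : ∀ i : Fin n, ∃ (v : (Basis.ofVectorSpaceIndex (k[X] ⧸ Ideal.span {p})
      (Qmod f p (i + 1))) → Module.AEval' f) (w : (Basis.ofVectorSpaceIndex (k[X] ⧸ Ideal.span {p})
      (Qmod f p (i + 1))) → Module.AEval' g), IsLift p i v ∧ IsLift p i w := by
    intro i
    obtain ⟨e⟩ := nonempty_linearEquiv_of_rank_eq (hnu (i + 1) (by omega) (by omega))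
    let b := Basis.ofVectorSpace (k[X] ⧸ Ideal.span {p}) (Qmod f p (i + 1))
    obtain ⟨v, hv⟩ := aux_lift f p i b
    obtain ⟨w, hw⟩ := aux_lift g p i (b.map e)
    exact ⟨v, w, hv, hw⟩
  choose v w hvw using h
  exact aux_equiv v (fun i => (hvw i).1) hn w (fun i => (hvw i).2) hn'

theorem aux_nu_eq (f g : Module.End k V) (e : Module.AEval' f ≃ₗ[k[X]] Module.AEval' g)
    (p : k[X]) (i : ℕ) : nu f p i = nu g p i := by
  have hk : ∀ i, (kerP f p i).map (e : Module.AEval' f →ₗ[k[X]] Module.AEval' g) = kerP g p i := by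
    intro i
    ext x
    simp only [kerP, Submodule.mem_map, Submodule.mem_torsionBy_iff]
    constructor
    · rintro ⟨y, hy, rfl⟩
      rw [LinearEquiv.coe_coe, ← map_smul, hy, map_zero]
    · intro h
      exact ⟨e.symm x, by rw [← map_smul, h, map_zero], by simp⟩
  have hw : (wSub f p i).map (e : Module.AEval' f →ₗ[k[X]] Module.AEval' g) = wSub g p i := by
    rw [wSub, wSub, Submodule.map_sup, hk, ← hk (i + 1), ← Submodule.map_comp, ← Submodule.map_comp]
    congr 2
    ext x
    simp
  let e' : kerP f p i ≃ₗ[k[X]] kerP g p i := LinearEquiv.ofSubmodules e _ _ (hk i)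
  have he' : ((wSub f p i).comap (kerP f p i).subtype).map (e' : kerP f p i →ₗ[k[X]] kerP g p i) =
      (wSub g p i).comap (kerP g p i).subtype := by
    ext x
    rw [← hw]
    simp only [Submodule.mem_map, Submodule.mem_comap, Submodule.subtype_apply]
    constructor
    · rintro ⟨y, hy, rfl⟩
      exact ⟨y, hy, rfl⟩
    · rintro ⟨y, hy, h⟩
      refine ⟨e'.symm x, ?_, by simp⟩
      have : ((e'.symm x : kerP f p i) : Module.AEval' f) = y := by
        apply e.injective
        change _ = (x : Module.AEval' g) at h
        have h2 : e y = x := h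
        rw [h2]
        exact congrArg Subtype.val (e'.apply_symm_apply x)
      rw [this]; exact hy
  let E : Qmod f p i ≃ₗ[k[X]] Qmod g p i := Submodule.Quotient.equiv _ _ e' he'
  refine rank_eq_of_equiv_equiv id E.toAddEquiv Function.bijective_id ?_
  intro r m
  obtain ⟨c, rfl⟩ := Ideal.Quotient.mk_surjective r
  rw [aux_mk_smul]
  refine (map_smul E c m).trans ?_
  exact (aux_mk_smul g p i c _).symm

theorem aux_glue {R : Type*} [CommRing R] {M N : Type*} [AddCommGroup M] [Module R M]
    [AddCommGroup N] [Module R N] {r : ℕ} (q : Fin r → R)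
    (hq : ∀ i j, i ≠ j → IsCoprime (q i) (q j))
    (hM : ∀ x : M, (∏ j, q j) • x = 0) (hN : ∀ x : N, (∏ j, q j) • x = 0)
    (h : ∀ j, Nonempty (Submodule.torsionBy R M (q j) ≃ₗ[R] Submodule.torsionBy R N (q j))) :
    Nonempty (M ≃ₗ[R] N) := by
  classical
  have hqq : ((Finset.univ : Finset (Fin r)) : Set (Fin r)).Pairwise
      (Function.onFun IsCoprime q) := fun i _ j _ hij => hq i j hij
  have iM := Submodule.torsionBy_isInternal (M := M) hqq (fun x => hM x)
  have iN := Submodule.torsionBy_isInternal (M := N) hqq (fun x => hN x)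
  let e := fun j => (h j).some
  exact ⟨(LinearEquiv.ofBijective (DirectSum.coeLinearMap _) iM).symm ≪≫ₗ
    DFinsupp.mapRange.linearEquiv (fun j => e j) ≪≫ₗ
    LinearEquiv.ofBijective (DirectSum.coeLinearMap _) iN⟩

theorem aux_stab {R : Type*} [CommRing R] {M : Type*} [AddCommGroup M] [Module R M] {r : ℕ}
    (p : Fin r → R) (n : Fin r → ℕ) (hq : ∀ i j, i ≠ j → IsCoprime (p i) (p j))
    (hM : ∀ x : M, (∏ j, p j ^ n j) • x = 0) (j : Fin r) (x : M)
    (hx : p j ^ (n j + 1) • x = 0) : p j ^ n j • x = 0 := by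
  classical
  have hc : IsCoprime (p j) (∏ i ∈ Finset.univ.erase j, p i ^ n i) :=
    IsCoprime.prod_right fun i hi => (hq j i (Finset.ne_of_mem_erase hi).symm).pow_right
  obtain ⟨u, w, huw⟩ := hc
  have h1 := hM x
  rw [← Finset.prod_erase_mul _ _ (Finset.mem_univ j), mul_smul] at h1
  calc p j ^ n j • x = (u * p j + w * ∏ i ∈ Finset.univ.erase j, p i ^ n i) • p j ^ n j • x := by
        rw [huw, one_smul]
    _ = u • (p j ^ (n j + 1) • x) +
        w • ((∏ i ∈ Finset.univ.erase j, p i ^ n i) • p j ^ n j • x) := by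
        rw [add_smul, mul_smul, mul_smul, pow_succ', mul_smul]
    _ = 0 := by rw [hx, h1]; simp

theorem aux_conj_iff (f g : Module.End k V) :
    (∃ τ : V ≃ₗ[k] V, g = ↑τ ∘ₗ f ∘ₗ ↑τ.symm) ↔
      Nonempty (Module.AEval' f ≃ₗ[k[X]] Module.AEval' g) := by
  constructor
  · rintro ⟨τ, rfl⟩
    refine ⟨LinearEquiv.ofAEval f (τ ≪≫ₗ Module.AEval'.of _) ?_⟩
    intro m
    rw [LinearEquiv.trans_apply, LinearEquiv.trans_apply, AEval'.X_smul_of]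
    simp
  · rintro ⟨e⟩
    refine ⟨AEval'.of f ≪≫ₗ e.restrictScalars k ≪≫ₗ (AEval'.of g).symm, ?_⟩
    ext x
    apply (AEval'.of g).injective
    simp only [LinearMap.comp_apply, LinearEquiv.coe_coe, LinearEquiv.trans_apply,
      LinearEquiv.trans_symm, LinearEquiv.symm_symm, LinearEquiv.apply_symm_apply,
      LinearEquiv.restrictScalars_apply]
    rw [← AEval'.X_smul_of, ← AEval'.X_smul_of, map_smul]
    congr 1
    simp only [LinearEquiv.apply_symm_apply]
    exact (e.apply_symm_apply _).symm

theorem aux_minpoly_conj (f : Module.End k V) (τ : V ≃ₗ[k] V) :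
    minpoly k ((↑τ ∘ₗ f ∘ₗ ↑τ.symm : Module.End k V)) = minpoly k f := by
  rw [← minpoly.algEquiv_eq (LinearEquiv.conjAlgEquiv k τ) f]
  congr 1

theorem aux_kill (f : Module.End k V) (q : k[X]) (h : minpoly k f = q) (x : Module.AEval' f) :
    q • x = 0 := by
  subst h
  apply (AEval'.of f).symm.injective
  rw [AEval.of_symm_smul, minpoly.aeval]
  simp

end Bridge

/-- **Classification Theorem.**  Let `V` be an arbitrary `k`-vector space and
let `f, g` be endomorphisms of `V` each admitting an annihilating polynomial, and let
`a_f(x) = p_1(x)^{n_1} ⋯ p_r(x)^{n_r}` be the factorization of the annihilator polynomial of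
`f` into powers of distinct monic irreducible polynomials.  Then there exists an automorphism
`τ` of `V` with `g = τ f τ⁻¹` if and only if:
(1) `a_g(x) = a_f(x)`; and
(2) `ν_i(V, p_j(f)) = ν_i(V, p_j(g))` for all `1 ≤ j ≤ r` and `1 ≤ i ≤ n_j`. -/
theorem stmt_7 {k : Type u} [Field k] {V : Type v} [AddCommGroup V] [Module k V]
    (f g : Module.End k V)
    (hf : ∃ q : k[X], q ≠ 0 ∧ aeval f q = 0)
    (hg : ∃ q : k[X], q ≠ 0 ∧ aeval g q = 0)
    (r : ℕ) (p : Fin r → k[X]) (n : Fin r → ℕ)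
    (hmonic : ∀ j, (p j).Monic) (hirr : ∀ j, Irreducible (p j))
    (hdist : ∀ j j', j ≠ j' → p j ≠ p j')
    (hmin : minpoly k f = ∏ j, p j ^ n j) :
    (∃ τ : V ≃ₗ[k] V, g = ↑τ ∘ₗ f ∘ₗ ↑τ.symm) ↔
      (minpoly k g = minpoly k f ∧
        ∀ j, ∀ i, 1 ≤ i → i ≤ n j → nu f (p j) i = nu g (p j) i) := by
  
  constructor
  · rintro ⟨τ, hτ⟩
    obtain ⟨e⟩ := (aux_conj_iff f g).1 ⟨τ, hτ⟩
    refine ⟨?_, fun j i _ _ => aux_nu_eq f g e (p j) i⟩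
    rw [hτ]; exact aux_minpoly_conj f τ
  · rintro ⟨h1, h2⟩
    rw [aux_conj_iff]
    have hcop : ∀ i j, i ≠ j → IsCoprime (p i) (p j) := by
      intro i j hij
      refine ((hirr i).isCoprime_or_dvd (p j)).resolve_right fun hd => hdist i j hij ?_
      exact eq_of_monic_of_associated (hmonic i) (hmonic j)
        ((hirr i).associated_of_dvd (hirr j) hd)
    have kf : ∀ x : Module.AEval' f, (∏ j, p j ^ n j) • x = 0 := aux_kill f _ hmin
    have kg : ∀ x : Module.AEval' g, (∏ j, p j ^ n j) • x = 0 := aux_kill g _ (h1.trans hmin)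
    exact aux_glue (fun j => p j ^ n j) (fun i j hij => (hcop i j hij).pow) kf kg fun j =>
      aux_torsion_equiv f g (p j) (hirr j) (n j) (aux_stab p n hcop kf j) (aux_stab p n hcop kg j)
        (h2 j)
end

section
/- (Existence of Jordan bases) Let V be an arbitrary k-vector space and f an endomorphism of V admitting an annihilating polynomial, with annihilator a_f(x) = p_1(x)^{n_1} ⋯ p_r(x)^{n_r}, the p_j(x) being distinct monic irreducible polynomials. Then V, regarded as a k[x]-module via q(x)·v = q(f)(v), is isomorphic to a direct sum ⊕_{j=1}^{r} ⊕_{i=1}^{n_j} (k[x]/(p_j(x)^i))^{(S_{ij})}, where each S_{ij} is an index set of cardinality ν_i(V, p_j(f)). -/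
open Polynomial Module

universe u v w

set_option linter.unusedSectionVars false

section Aux

variable {R : Type*} [CommRing R] [IsDomain R] [IsPrincipalIdealRing R]
  {M : Type*} [AddCommGroup M] [Module R M]

open Submodule DirectSum

theorem aux_inj_fin {T : Type*} {p : R} (e : T → ℕ) (v : T → M)
    (h0 : ∀ t, p ^ (e t + 1) • v t = 0)
    (hind : ∀ (i : ℕ) (F : Finset T) (c : T → R), (∀ t ∈ F, e t = i) →
      (∃ a y : M, p ^ i • a = 0 ∧ p ^ (i + 2) • y = 0 ∧ ∑ t ∈ F, c t • v t = a + p • y) →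
      ∀ t ∈ F, p ∣ c t)
    (F : Finset T) (c : T → R) (hs : ∑ t ∈ F, (p ^ e t * c t) • v t = 0) :
    ∀ i, ∀ t ∈ F, e t = i → p ∣ c t := by
  classical
  intro i
  induction i using Nat.strong_induction_on with
  | _ i ih =>
  intro t ht hti
  refine hind i (F.filter (fun t => e t = i)) c (by simp) ?_ t (by simp [ht, hti])
  -- y = sum over e t > i
  set y : M := ∑ t ∈ F.filter (fun t => i < e t), (p ^ (e t - i - 1) * c t) • v t with hy
  refine ⟨∑ t ∈ F.filter (fun t => e t = i), c t • v t + p • y, -y, ?_, ?_, ?_⟩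
  · rw [← hs]
    have h3 : ∀ t ∈ F, (p ^ e t * c t) • v t =
        (if e t = i then (p ^ e t * c t) • v t else 0) +
        (if i < e t then (p ^ e t * c t) • v t else 0) := by
      intro s hs'
      rcases lt_trichotomy (e s) i with h | h | h
      · obtain ⟨d, hd⟩ := ih _ h s hs' rfl
        rw [if_neg (by omega), if_neg (by omega), hd]
        have : p ^ e s * (p * d) = d * p ^ (e s + 1) := by ring
        rw [this, mul_smul, h0, smul_zero, add_zero]
      · rw [if_pos h, if_neg (by omega), add_zero]
      · rw [if_neg (by omega), if_pos h, zero_add]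
    rw [Finset.sum_congr rfl h3, Finset.sum_add_distrib, ← Finset.sum_filter, ← Finset.sum_filter,
      smul_add, Finset.smul_sum, hy, Finset.smul_sum, Finset.smul_sum]
    congr 1
    · refine Finset.sum_congr rfl fun s hs' => ?_
      rw [Finset.mem_filter] at hs'
      rw [smul_smul, hs'.2]
    · refine Finset.sum_congr rfl fun s hs' => ?_
      rw [Finset.mem_filter] at hs'
      rw [smul_smul, smul_smul]
      congr 1
      obtain ⟨d, hd⟩ := Nat.exists_eq_add_of_lt hs'.2
      rw [hd, show i + d + 1 - i - 1 = d by omega]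
      ring
  · rw [smul_neg, neg_eq_zero, hy, Finset.smul_sum]
    refine Finset.sum_eq_zero fun s hs' => ?_
    rw [Finset.mem_filter] at hs'
    obtain ⟨d, hd⟩ := Nat.exists_eq_add_of_lt hs'.2
    have : p ^ (i + 2) * (p ^ (e s - i - 1) * c s) = c s * p ^ (e s + 1) := by
      rw [hd, show i + d + 1 - i - 1 = d by omega]
      ring
    rw [smul_smul, this, mul_smul, h0, smul_zero]
  · simp

/-- surjectivity -/
theorem aux_surj {p : R} (N : Submodule R M) (n : ℕ)
    (hn : ∀ m, ∀ x : M, p ^ m • x = 0 → p ^ n • x = 0)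
    (hspan : ∀ i, ∀ x : M, p ^ (i + 1) • x = 0 →
      ∃ z ∈ N, ∃ a y : M, p ^ i • a = 0 ∧ p ^ (i + 2) • y = 0 ∧ x = z + (a + p • y)) :
    ∀ i, ∀ x : M, p ^ i • x = 0 → x ∈ N := by
  have key : ∀ m i, ∀ x : M, p ^ (i + 1) • x = 0 →
      ∃ z ∈ N, ∃ a y : M, p ^ i • a = 0 ∧ p ^ (i + 1 + m) • y = 0 ∧ x = z + (a + p ^ m • y) := by
    intro m
    induction m with
    | zero => exact fun i x hx => ⟨0, N.zero_mem, 0, x, by simp, hx, by simp⟩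
    | succ m ih =>
      intro i x hx
      obtain ⟨z, hz, a, y, ha, hy, rfl⟩ := hspan i x hx
      obtain ⟨z', hz', a', y', ha', hy', rfl⟩ := ih (i + 1) y hy
      refine ⟨z + p • z', N.add_mem hz (N.smul_mem _ hz'), a + p • a', y', ?_, ?_, ?_⟩
      · rw [smul_add, ha, smul_smul, ← pow_succ, ha', add_zero]
      · rw [← hy']; congr 2; ring
      · rw [pow_succ', mul_smul]; simp only [smul_add]; abel
  intro i
  induction i with
  | zero => intro x hx; rw [pow_zero, one_smul] at hx; rw [hx]; exact N.zero_mem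
  | succ i ih =>
    intro x hx
    obtain ⟨z, hz, a, y, ha, hy, rfl⟩ := key n i x hx
    rw [hn _ _ hy, add_zero]
    exact N.add_mem hz (ih a ha)

theorem aux_single {T : Type*} {p : R} (hp : Irreducible p) (n : ℕ) (e : T → ℕ) (v : T → M)
    (hen : ∀ t, e t < n)
    (hn : ∀ m, ∀ x : M, p ^ m • x = 0 → p ^ n • x = 0)
    (h0 : ∀ t, p ^ (e t + 1) • v t = 0)
    (hind : ∀ (i : ℕ) (F : Finset T) (c : T → R), (∀ t ∈ F, e t = i) →
      (∃ a y : M, p ^ i • a = 0 ∧ p ^ (i + 2) • y = 0 ∧ ∑ t ∈ F, c t • v t = a + p • y) →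
      ∀ t ∈ F, p ∣ c t)
    (hspan : ∀ i, ∀ x : M, p ^ (i + 1) • x = 0 →
      ∃ z ∈ span R (Set.range v), ∃ a y : M,
        p ^ i • a = 0 ∧ p ^ (i + 2) • y = 0 ∧ x = z + (a + p • y)) :
    Nonempty (torsionBy R M (p ^ n) ≃ₗ[R] ⨁ t : T, R ⧸ Ideal.span {p ^ (e t + 1)}) := by
  classical
  let Φ : (⨁ t : T, R ⧸ Ideal.span {p ^ (e t + 1)}) →ₗ[R] M :=
    DirectSum.toModule R T M fun t =>
      liftQSpanSingleton (p ^ (e t + 1)) (LinearMap.toSpanSingleton R M (v t)) (h0 t)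
  have hΦ : ∀ t (r : R), Φ (DirectSum.lof R T _ t (Ideal.Quotient.mk _ r)) = r • v t := by
    intro t r
    simp only [Φ, DirectSum.toModule_lof]
    rfl
  have hpn : ∀ z : (⨁ t : T, R ⧸ Ideal.span {p ^ (e t + 1)}), p ^ n • z = 0 := by
    intro z
    refine DFinsupp.ext fun t => ?_
    change p ^ n • z t = 0
    obtain ⟨r, hr⟩ := Ideal.Quotient.mk_surjective (z t)
    rw [← hr]
    change Ideal.Quotient.mk _ (p ^ n * r) = 0
    rw [Ideal.Quotient.eq_zero_iff_mem, Ideal.mem_span_singleton]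
    exact Dvd.dvd.mul_right (pow_dvd_pow _ (hen t)) _
  have hsoc : ∀ z, Φ z = 0 → p • z = 0 → z = 0 := by
    intro z hz hpz
    have h1 : ∀ t, ∃ c : R, z t = Ideal.Quotient.mk _ (p ^ e t * c) := by
      intro t
      obtain ⟨r, hr⟩ := Ideal.Quotient.mk_surjective (z t)
      have h2 : p • z t = 0 := by
        have := DFunLike.congr_fun hpz t
        exact this
      rw [← hr] at h2
      change Ideal.Quotient.mk _ (p * r) = 0 at h2
      rw [Ideal.Quotient.eq_zero_iff_mem, Ideal.mem_span_singleton, pow_succ',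
        mul_dvd_mul_iff_left hp.ne_zero] at h2
      obtain ⟨c, rfl⟩ := h2
      exact ⟨c, hr.symm⟩
    choose c hc using h1
    have hzsum : z = ∑ t ∈ DFinsupp.support z, DirectSum.lof R T _ t (z t) :=
      (DirectSum.sum_support_of z).symm
    have hs : ∑ t ∈ DFinsupp.support z, (p ^ e t * c t) • v t = 0 := by
      rw [← hz]
      conv_rhs => rw [hzsum]
      rw [map_sum]
      refine Finset.sum_congr rfl fun t _ => ?_
      rw [hc, hΦ]
    refine DFinsupp.ext fun t => ?_
    by_contra hne
    have hmem : t ∈ DFinsupp.support z := DFinsupp.mem_support_iff.mpr hne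
    obtain ⟨d, hd⟩ := aux_inj_fin e v h0 hind _ c hs _ t hmem rfl
    apply hne
    change z t = 0
    rw [hc, hd, Ideal.Quotient.eq_zero_iff_mem, Ideal.mem_span_singleton]
    exact ⟨d, by ring⟩
  have hinj' : ∀ m, ∀ z, Φ z = 0 → p ^ m • z = 0 → z = 0 := by
    intro m
    induction m with
    | zero => intro z _ h; simpa using h
    | succ m ih =>
      intro z hz h
      refine hsoc z hz (ih _ (by rw [map_smul, hz, smul_zero]) ?_)
      rw [smul_smul, ← pow_succ, h]
  have hinj : Function.Injective Φ :=
    (injective_iff_map_eq_zero Φ).mpr fun z hz => hinj' n z hz (hpn z)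
  have hrange : LinearMap.range Φ = torsionBy R M (p ^ n) := by
    apply le_antisymm
    · rintro _ ⟨z, rfl⟩
      rw [mem_torsionBy_iff, ← map_smul, hpn, map_zero]
    · intro x hx
      refine (span_le.mpr ?_ : span R (Set.range v) ≤ _) (aux_surj _ n hn hspan n x hx)
      rintro _ ⟨t, rfl⟩
      exact ⟨DirectSum.lof R T _ t (Ideal.Quotient.mk _ 1), by rw [hΦ, one_smul]⟩
  exact ⟨((LinearEquiv.ofInjective Φ hinj).trans (LinearEquiv.ofEq _ _ hrange)).symm⟩

theorem aux_internal {r : ℕ} (q : Fin r → R) (hq : ∀ j j', j ≠ j' → IsCoprime (q j) (q j'))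
    (ht : ∀ x : M, (∏ j, q j) • x = 0) :
    DirectSum.IsInternal fun j : Fin r => torsionBy R M (q j) := by
  classical
  have hint0 := Submodule.torsionBy_isInternal (R := R) (M := M)
    (S := Finset.univ) (q := q) (fun j _ j' _ h => hq j j' h) (fun x => ht x)
  rw [DirectSum.isInternal_submodule_iff_iSupIndep_and_iSup_eq_top] at hint0 ⊢
  let e : Fin r ≃ (Finset.univ : Finset (Fin r)) :=
    (Equiv.subtypeUnivEquiv (fun x => Finset.mem_univ x)).symm
  refine ⟨hint0.1.comp e.injective, ?_⟩
  rw [← hint0.2]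
  exact Equiv.iSup_congr e fun _ => rfl

theorem aux_assemble {r : ℕ} (N : Fin r → Submodule R M) (hN : DirectSum.IsInternal N)
    {T : Fin r → Type*} (I : ∀ j, T j → Ideal R)
    (hE : ∀ j, Nonempty (N j ≃ₗ[R] ⨁ x : T j, R ⧸ I j x)) :
    Nonempty (M ≃ₗ[R] ⨁ x : Σ j, T j, R ⧸ I x.1 x.2) := by
  classical
  exact ⟨(LinearEquiv.ofBijective (DirectSum.coeLinearMap N) hN).symm.trans <|
    (DFinsupp.mapRange.linearEquiv fun j => (hE j).some).trans <|
      (DirectSum.sigmaLcurryEquiv R (δ := fun j (x : T j) => R ⧸ I j x)).symm⟩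

end Aux

section Aux2

variable {k : Type u} [Field k] {V : Type v} [AddCommGroup V] [Module k V]

theorem aux_mem_wSub (f : Module.End k V) (p : k[X]) (i : ℕ) (x : Module.AEval' f) :
    x ∈ wSub f p (i + 1) ↔
      ∃ a y : Module.AEval' f, p ^ i • a = 0 ∧ p ^ (i + 2) • y = 0 ∧ x = a + p • y := by
  unfold wSub kerP
  rw [Submodule.mem_sup]
  constructor
  · rintro ⟨a, ha, _, ⟨y, hy, rfl⟩, rfl⟩
    exact ⟨a, y, ha, hy, rfl⟩
  · rintro ⟨a, y, ha, hy, rfl⟩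
    exact ⟨a, ha, _, ⟨y, hy, rfl⟩, rfl⟩

theorem aux_basis (f : Module.End k V) {p : k[X]} (hp : Irreducible p) (i : ℕ) :
    ∃ (S : Type v) (_ : Basis S (k[X] ⧸ Ideal.span {p}) (Qmod f p i)),
      Cardinal.mk S = nu f p i := by
  haveI := PrincipalIdealRing.isMaximal_of_irreducible hp
  letI : Field (k[X] ⧸ Ideal.span {p}) := Ideal.Quotient.field _
  haveI : Module.Free (k[X] ⧸ Ideal.span {p}) (Qmod f p i) := Module.Free.of_divisionRing _ _
  exact ⟨_, Module.Free.chooseBasis (k[X] ⧸ Ideal.span {p}) (Qmod f p i),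
    (Module.Free.rank_eq_card_chooseBasisIndex _ _).symm⟩

theorem aux_level (f : Module.End k V) {p : k[X]} (hp : Irreducible p) (i : ℕ) :
    ∃ (S : Type v) (v : S → Module.AEval' f), Cardinal.mk S = nu f p (i + 1) ∧
      (∀ s, p ^ (i + 1) • v s = 0) ∧
      (∀ (F : Finset S) (c : S → k[X]),
        (∃ a y : Module.AEval' f, p ^ i • a = 0 ∧ p ^ (i + 2) • y = 0 ∧
          ∑ t ∈ F, c t • v t = a + p • y) → ∀ t ∈ F, p ∣ c t) ∧
      (∀ x : Module.AEval' f, p ^ (i + 1) • x = 0 →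
        ∃ z ∈ Submodule.span k[X] (Set.range v), ∃ a y : Module.AEval' f,
          p ^ i • a = 0 ∧ p ^ (i + 2) • y = 0 ∧ x = z + (a + p • y)) := by
  obtain ⟨S, b, hS⟩ := aux_basis f hp (i + 1)
  choose w hw using fun s => Submodule.Quotient.mk_surjective _ (b s)
  refine ⟨S, fun s => (w s : Module.AEval' f), hS, fun s => (w s).2, ?_, ?_⟩
  · intro F c h t ht
    have h1 : (∑ t ∈ F, c t • w t) ∈ (wSub f p (i + 1)).comap (kerP f p (i + 1)).subtype := by
      rw [Submodule.mem_comap, aux_mem_wSub]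
      obtain ⟨a, y, ha, hy, hh⟩ := h
      refine ⟨a, y, ha, hy, ?_⟩
      rw [← hh, map_sum]
      rfl
    rw [← Submodule.Quotient.mk_eq_zero, ← Submodule.mkQ_apply, map_sum] at h1
    have h2 : ∑ t ∈ F, (Ideal.Quotient.mk (Ideal.span {p}) (c t)) • b t = 0 := by
      rw [← h1]
      refine Finset.sum_congr rfl fun s _ => ?_
      rw [map_smul, Submodule.mkQ_apply, hw]
      rfl
    have h3 := linearIndependent_iff'.mp b.linearIndependent F _ h2 t ht
    rwa [Ideal.Quotient.eq_zero_iff_mem, Ideal.mem_span_singleton] at h3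
  · intro x hx
    let x' : kerP f p (i + 1) := ⟨x, hx⟩
    have h1 := b.linearCombination_repr (Submodule.Quotient.mk x')
    choose c hc using fun s =>
      Ideal.Quotient.mk_surjective (b.repr (Submodule.Quotient.mk x') s)
    rw [Finsupp.linearCombination_apply, Finsupp.sum] at h1
    set F := (b.repr (Submodule.Quotient.mk x')).support
    have h2 : (Submodule.Quotient.mk (∑ s ∈ F, c s • w s) : Qmod f p (i + 1)) =
        Submodule.Quotient.mk x' := by
      rw [← h1, ← Submodule.mkQ_apply, map_sum]
      refine Finset.sum_congr rfl fun s _ => ?_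
      rw [map_smul, Submodule.mkQ_apply, hw, ← hc]
      rfl
    have h3 := (Submodule.Quotient.eq _).mp h2.symm
    rw [Submodule.mem_comap, aux_mem_wSub] at h3
    obtain ⟨a, y, ha, hy, hh⟩ := h3
    refine ⟨∑ s ∈ F, c s • (w s : Module.AEval' f), ?_, a, y, ha, hy, ?_⟩
    · exact Submodule.sum_mem _ fun s _ => Submodule.smul_mem _ _ (Submodule.subset_span ⟨s, rfl⟩)
    · rw [← hh, map_sub, map_sum]
      change x = ∑ s ∈ F, c s • (w s : Module.AEval' f) +
        (x - ∑ s ∈ F, c s • (w s : Module.AEval' f))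
      abel

theorem aux_prime (f : Module.End k V) {p : k[X]} (hp : Irreducible p) (n : ℕ)
    (hn : ∀ m, ∀ x : Module.AEval' f, p ^ m • x = 0 → p ^ n • x = 0)
    (S : ℕ → Type v) (v : ∀ i, S i → Module.AEval' f)
    (h0 : ∀ i s, p ^ (i + 1) • v (i + 1) s = 0)
    (hind : ∀ i, ∀ (F : Finset (S (i + 1))) (c : S (i + 1) → k[X]),
        (∃ a y : Module.AEval' f, p ^ i • a = 0 ∧ p ^ (i + 2) • y = 0 ∧
          ∑ t ∈ F, c t • v (i + 1) t = a + p • y) → ∀ t ∈ F, p ∣ c t)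
    (hspan : ∀ i, ∀ x : Module.AEval' f, p ^ (i + 1) • x = 0 →
        ∃ z ∈ Submodule.span k[X] (Set.range (v (i + 1))), ∃ a y : Module.AEval' f,
          p ^ i • a = 0 ∧ p ^ (i + 2) • y = 0 ∧ x = z + (a + p • y)) :
    Nonempty (Submodule.torsionBy k[X] (Module.AEval' f) (p ^ n) ≃ₗ[k[X]]
      DirectSum (Σ i : Fin n, S ((i : ℕ) + 1))
        fun x => k[X] ⧸ Ideal.span {p ^ ((x.1 : ℕ) + 1)}) := by
  classical
  refine aux_single hp n (fun x : Σ i : Fin n, S ((i : ℕ) + 1) => (x.1 : ℕ))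
    (fun x => v _ x.2) (fun x => x.1.2) hn (fun x => h0 _ _) ?_ ?_
  · rintro i F c hF ⟨a, y, ha, hy, hs⟩ ⟨⟨i', hi'⟩, t⟩ ht
    obtain rfl : i' = i := hF _ ht
    let g : S (i' + 1) → Σ i : Fin n, S ((i : ℕ) + 1) := fun s => ⟨⟨i', hi'⟩, s⟩
    have hg : Function.Injective g := fun s s' h => by
      simpa [g] using h
    have hFg : F = (F.preimage g hg.injOn).image g := by
      ext ⟨⟨j, hj⟩, s⟩
      simp only [Finset.mem_image, Finset.mem_preimage]
      constructor
      · intro h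
        obtain rfl : j = i' := hF _ h
        exact ⟨s, h, rfl⟩
      · rintro ⟨s', h, h'⟩
        rw [← h']; exact h
    refine hind i' (F.preimage g hg.injOn) (fun s => c (g s)) ⟨a, y, ha, hy, ?_⟩ t
      (Finset.mem_preimage.mpr ht)
    rw [← hs]
    conv_rhs => rw [hFg]
    rw [Finset.sum_image hg.injOn]
  · intro i x hx
    by_cases hi : i < n
    · obtain ⟨z, hz, h⟩ := hspan i x hx
      refine ⟨z, Submodule.span_mono ?_ hz, h⟩
      rintro _ ⟨s, rfl⟩
      exact ⟨⟨⟨i, hi⟩, s⟩, rfl⟩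
    · refine ⟨0, Submodule.zero_mem _, x, 0, ?_, by simp, by simp⟩
      obtain ⟨d, rfl⟩ := Nat.exists_eq_add_of_le (not_lt.mp hi)
      rw [add_comm, pow_add, mul_smul, hn _ x hx, smul_zero]

end Aux2

open DirectSum

/-- **Existence of Jordan bases.**  Let `V` be an arbitrary `k`-vector space and
`f` an endomorphism of `V` admitting an annihilating polynomial, with annihilator
`a_f(x) = p_1(x)^{n_1} ⋯ p_r(x)^{n_r}`, the `p_j(x)` being distinct monic irreducible
polynomials.  Then `V`, regarded as a `k[x]`-module via `q(x) • v = q(f)(v)` (the type synonym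
`Module.AEval' f`), is isomorphic to a direct sum
`⊕_{j=1}^{r} ⊕_{i=1}^{n_j} (k[x]/(p_j(x)^i))^{(S j i)}`, where each `S j i` is an index set of
cardinality `ν_i(V, p_j(f))`. -/
theorem stmt_9 {k : Type u} [Field k] {V : Type v} [AddCommGroup V] [Module k V]
    (f : Module.End k V) (hf : ∃ q : k[X], q ≠ 0 ∧ aeval f q = 0)
    (r : ℕ) (p : Fin r → k[X]) (n : Fin r → ℕ)
    (hmonic : ∀ j, (p j).Monic) (hirr : ∀ j, Irreducible (p j))
    (hdist : ∀ j j', j ≠ j' → p j ≠ p j')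
    (hmin : minpoly k f = ∏ j, p j ^ n j) :
    ∃ (S : Fin r → ℕ → Type v)
      (_ : Module.AEval' f ≃ₗ[k[X]]
        ⨁ x : Σ j : Fin r, Σ _i : Fin (n j), S j ((_i : ℕ) + 1),
          k[X] ⧸ Ideal.span {p x.1 ^ ((x.2.1 : ℕ) + 1)}),
      ∀ j : Fin r, ∀ i : Fin (n j), Cardinal.mk (S j ((i : ℕ) + 1)) = nu f (p j) ((i : ℕ) + 1) := by
  classical
  choose S v hS h0 hind hspan using fun j i => aux_level f (hirr j) i
  have hcop : ∀ j j', j ≠ j' → IsCoprime (p j) (p j') := by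
    intro j j' h
    refine (hirr j).coprime_iff_not_dvd.mpr fun hd => hdist j j' h ?_
    exact eq_of_monic_of_associated (hmonic j) (hmonic j')
      ((hirr j).associated_of_dvd (hirr j') hd)
  have htor : ∀ x : Module.AEval' f, (∏ j, p j ^ n j) • x = 0 := by
    intro x
    rw [← hmin]
    have h1 : (minpoly k f) • (Module.AEval'.of f ((Module.AEval'.of f).symm x)) = 0 := by
      rw [Module.AEval'.of, ← Module.AEval.of_aeval_smul, minpoly.aeval, zero_smul, map_zero]
    simpa using h1
  have hn : ∀ j m, ∀ x : Module.AEval' f, p j ^ m • x = 0 → p j ^ n j • x = 0 := by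
    intro j m x hx
    have hc : IsCoprime (p j ^ m) (∏ j' ∈ Finset.univ.erase j, p j' ^ n j') :=
      IsCoprime.prod_right fun j' hj' =>
        IsCoprime.pow (hcop j j' (Finset.ne_of_mem_erase hj').symm)
    obtain ⟨a, b, hab⟩ := hc
    have h2 := htor x
    rw [← Finset.mul_prod_erase _ _ (Finset.mem_univ j)] at h2
    calc p j ^ n j • x = (p j ^ n j * (a * p j ^ m +
          b * ∏ j' ∈ Finset.univ.erase j, p j' ^ n j')) • x := by rw [hab, mul_one]
      _ = (p j ^ n j * a) • (p j ^ m • x) +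
          b • ((p j ^ n j * ∏ j' ∈ Finset.univ.erase j, p j' ^ n j') • x) := by
        rw [smul_smul, smul_smul, ← add_smul]; congr 1; ring
      _ = 0 := by rw [hx, h2, smul_zero, smul_zero, add_zero]
  let S' : Fin r → ℕ → Type v := fun j i => S j (i - 1)
  have hE : ∀ j, Nonempty (Submodule.torsionBy k[X] (Module.AEval' f) (p j ^ n j) ≃ₗ[k[X]]
      DirectSum (Σ i : Fin (n j), S' j ((i : ℕ) + 1))
        fun x => k[X] ⧸ Ideal.span {p j ^ ((x.1 : ℕ) + 1)}) := fun j =>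
    aux_prime f (hirr j) (n j) (hn j) (S' j) (fun i => v j (i - 1)) (h0 j) (hind j) (hspan j)
  have hint := aux_internal (M := Module.AEval' f) (fun j : Fin r => p j ^ n j)
    (fun j j' h => IsCoprime.pow (hcop j j' h)) htor
  obtain ⟨E⟩ := aux_assemble (M := Module.AEval' f) _ hint
    (fun j (x : Σ i : Fin (n j), S' j ((i : ℕ) + 1)) => Ideal.span {p j ^ ((x.1 : ℕ) + 1)}) hE
  exact ⟨S', E, fun j i => hS j i⟩
end

section
/- Let V be an arbitrary k-vector space and f an endomorphism of V admitting an annihilating polynomial, with annihilator a_f(x) = p_1(x)^{n_1} ⋯ p_r(x)^{n_r}, the p_j(x) being distinct monic irreducible polynomials with deg p_j = d_j. Then, as cardinals, dim_k V = Σ_{j=1}^{r} Σ_{i=1}^{n_j} i · d_j · ν_i(V, p_j(f)). -/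
open Polynomial Module

universe u v w

section Helpers

theorem rank_exact_aux {k : Type u} [Field k] {A B C : Type v} [AddCommGroup A] [AddCommGroup B]
    [AddCommGroup C] [Module k A] [Module k B] [Module k C] (g : C →ₗ[k] A) (h : A →ₗ[k] B)
    (hg : Function.Injective g) (hh : Function.Surjective h) (e : Function.Exact g h) :
    Module.rank k A = Module.rank k B + Module.rank k C := by
  rw [← LinearMap.rank_range_add_rank_ker h, rank_range_of_surjective h hh,
    (LinearMap.exact_iff.mp e), rank_range_of_injective g hg]

variable {k : Type u} [Field k] {V : Type v} [AddCommGroup V] [Module k V]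

theorem mem_kerP (f : Module.End k V) (p : k[X]) (i : ℕ) (x : Module.AEval' f) :
    x ∈ kerP f p i ↔ p ^ i • x = 0 := Submodule.mem_torsionBy_iff _ _

/-- image of `Ker p^(i+1)` under `p^i`. -/
noncomputable def gSub (f : Module.End k V) (p : k[X]) (i : ℕ) :
    Submodule k[X] (Module.AEval' f) :=
  (kerP f p (i + 1)).map (LinearMap.lsmul k[X] (Module.AEval' f) (p ^ i))

theorem mem_gSub (f : Module.End k V) (p : k[X]) (i : ℕ) (x : Module.AEval' f) :
    x ∈ gSub f p i ↔ ∃ y, p ^ (i + 1) • y = 0 ∧ p ^ i • y = x := by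
  simp [gSub, Submodule.mem_map, mem_kerP]

/-- multiplication by `p^i`. -/
noncomputable def gMap (f : Module.End k V) (p : k[X]) (i : ℕ) :
    kerP f p (i + 1) →ₗ[k[X]] gSub f p i :=
  (LinearMap.lsmul k[X] (Module.AEval' f) (p ^ i)).restrict
    (fun x hx => Submodule.mem_map_of_mem hx)

theorem gMap_coe (f : Module.End k V) (p : k[X]) (i : ℕ) (x : kerP f p (i + 1)) :
    (gMap f p i x : Module.AEval' f) = p ^ i • (x : Module.AEval' f) := rfl

theorem gMap_surj (f : Module.End k V) (p : k[X]) (i : ℕ) :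
    Function.Surjective (gMap f p i) := by
  rintro ⟨x, hx⟩
  obtain ⟨y, hy, h⟩ := (mem_gSub f p i x).mp hx
  exact ⟨⟨y, (mem_kerP ..).mpr hy⟩, Subtype.ext h⟩

theorem kerP_mono (f : Module.End k V) (p : k[X]) (i : ℕ) : kerP f p i ≤ kerP f p (i + 1) := by
  intro x hx
  rw [mem_kerP] at *
  rw [pow_succ', mul_smul, hx, smul_zero]

theorem gSub_anti (f : Module.End k V) (p : k[X]) (i : ℕ) : gSub f p (i + 1) ≤ gSub f p i := by
  intro x hx
  obtain ⟨y, hy, rfl⟩ := (mem_gSub ..).mp hx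
  refine (mem_gSub ..).mpr ⟨p • y, ?_, ?_⟩
  · rw [← mul_smul, ← pow_succ, hy]
  · rw [← mul_smul, ← pow_succ]

theorem rank_kerP_succ (f : Module.End k V) (p : k[X]) (i : ℕ) :
    Module.rank k (kerP f p (i + 1)) =
      Module.rank k (gSub f p i) + Module.rank k (kerP f p i) := by
  refine rank_exact_aux ((Submodule.inclusion (kerP_mono f p i)).restrictScalars k)
    ((gMap f p i).restrictScalars k) (Submodule.inclusion_injective (kerP_mono f p i)) (gMap_surj f p i) ?_
  intro x
  constructor
  · intro h
    have h' : p ^ i • (x : Module.AEval' f) = 0 := congrArg Subtype.val h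
    exact ⟨⟨x, (mem_kerP ..).mpr h'⟩, rfl⟩
  · rintro ⟨y, rfl⟩
    exact Subtype.ext ((mem_kerP ..).mp y.2)

theorem ker_aux (f : Module.End k V) (p : k[X]) (i : ℕ) :
    (wSub f p (i + 1)).comap (kerP f p (i + 1)).subtype =
    LinearMap.ker (((gSub f p (i + 1)).comap (gSub f p i).subtype).mkQ ∘ₗ gMap f p i) := by
  ext ⟨x, hx⟩
  rw [LinearMap.mem_ker, LinearMap.comp_apply, Submodule.mkQ_apply, Submodule.Quotient.mk_eq_zero,
    Submodule.mem_comap, Submodule.mem_comap, Submodule.subtype_apply, Submodule.subtype_apply,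
    gMap_coe, mem_gSub, wSub, Submodule.mem_sup]
  simp only [Submodule.mem_map, mem_kerP, Nat.add_sub_cancel, LinearMap.lsmul_apply]
  constructor
  · rintro ⟨a, ha, _, ⟨b, hb, rfl⟩, rfl⟩
    refine ⟨b, hb, ?_⟩
    rw [smul_add, ha, zero_add, ← mul_smul, ← pow_succ]
  · rintro ⟨y, hy, h⟩
    refine ⟨x - p • y, ?_, p • y, ⟨y, hy, rfl⟩, sub_add_cancel _ _⟩
    rw [smul_sub, ← mul_smul, ← pow_succ, h, sub_self]

theorem rank_Qmod_eq (f : Module.End k V) (p : k[X]) (i : ℕ) :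
    Module.rank k (Qmod f p (i + 1)) =
      Module.rank k (gSub f p i ⧸ (gSub f p (i + 1)).comap (gSub f p i).subtype) := by
  have hs : Function.Surjective
      (((gSub f p (i + 1)).comap (gSub f p i).subtype).mkQ ∘ₗ gMap f p i) :=
    (Submodule.mkQ_surjective _).comp (gMap_surj f p i)
  exact (((Submodule.quotEquivOfEq _ _ (ker_aux f p i)).trans
    (LinearMap.quotKerEquivOfSurjective _ hs)).restrictScalars k).rank_eq

theorem rank_exact_aux2 {A B C : Type v} [AddCommGroup A] [AddCommGroup B]
    [AddCommGroup C] [Module k A] [Module k B] [Module k C] [Module k[X] A] [Module k[X] B]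
    [Module k[X] C] [IsScalarTower k k[X] A] [IsScalarTower k k[X] B] [IsScalarTower k k[X] C]
    (g : C →ₗ[k[X]] A) (h : A →ₗ[k[X]] B)
    (hg : Function.Injective g) (hh : Function.Surjective h) (e : Function.Exact g h) :
    Module.rank k A = Module.rank k B + Module.rank k C :=
  rank_exact_aux (g.restrictScalars k) (h.restrictScalars k) hg hh e

theorem rank_quot_aux {A : Type v} [AddCommGroup A] [Module k A] [Module k[X] A]
    [IsScalarTower k k[X] A] (G H : Submodule k[X] A) (hle : H ≤ G) :
    Module.rank k G = Module.rank k (G ⧸ H.comap G.subtype) + Module.rank k H := by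
  have e : Function.Exact (Submodule.inclusion hle) (Submodule.mkQ (H.comap G.subtype)) := by
    intro x
    rw [Submodule.mkQ_apply, Submodule.Quotient.mk_eq_zero]
    constructor
    · intro h
      exact ⟨⟨x, h⟩, rfl⟩
    · rintro ⟨y, rfl⟩
      exact y.2
  exact rank_exact_aux2 (k := k) (Submodule.inclusion hle) (Submodule.mkQ (H.comap G.subtype))
    (Submodule.inclusion_injective hle) (Submodule.mkQ_surjective _) e

theorem rank_pi_fin_aux (r : ℕ) (M : Fin r → Type v) [∀ i, AddCommGroup (M i)]
    [∀ i, Module k (M i)] : Module.rank k (∀ i, M i) = ∑ i, Module.rank k (M i) := by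
  induction r with
  | zero => simp
  | succ r ih =>
    rw [← (Fin.consLinearEquiv k M).rank_eq, rank_prod', ih, Fin.sum_univ_succ]

theorem rank_gSub (f : Module.End k V) (p : k[X]) (i : ℕ) :
    Module.rank k (gSub f p i) =
      Module.rank k (Qmod f p (i + 1)) + Module.rank k (gSub f p (i + 1)) := by
  exact (rank_quot_aux (gSub f p i) (gSub f p (i + 1)) (gSub_anti f p i)).trans
    (congrArg (· + Module.rank k (gSub f p (i + 1))) (rank_Qmod_eq f p i).symm)

theorem rank_Qmod (f : Module.End k V) (p : k[X]) (hp : Irreducible p) (i : ℕ) :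
    Module.rank k (Qmod f p i) = (p.natDegree : Cardinal.{v}) * nu f p i := by
  have : (Ideal.span {p}).IsMaximal :=
    PrincipalIdealRing.isMaximal_of_irreducible hp
  let : Field (k[X] ⧸ Ideal.span {p}) := Ideal.Quotient.field _
  have : IsScalarTower k (k[X] ⧸ Ideal.span {p}) (Qmod f p i) :=
    Module.IsTorsionBySet.isScalarTower
      ((Module.isTorsionBySet_span_singleton_iff p).mpr (qmod_isTorsionBy f p i))
  have h := lift_rank_mul_lift_rank k (k[X] ⧸ Ideal.span {p}) (Qmod f p i)
  have hd : Module.rank k (k[X] ⧸ Ideal.span {p}) = (p.natDegree : Cardinal.{u}) := by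
    have h1 := (AdjoinRoot.powerBasis hp.ne_zero).finrank
    have : Module.Finite k (AdjoinRoot p) := (AdjoinRoot.powerBasis hp.ne_zero).finite
    have h2 := Module.finrank_eq_rank k (AdjoinRoot p)
    rw [h1, AdjoinRoot.powerBasis_dim] at h2
    exact h2.symm
  rw [hd] at h
  apply Cardinal.lift_injective.{u}
  rw [← h]
  simp [nu]

theorem rank_gSub_sum (f : Module.End k V) (p : k[X]) (i m : ℕ)
    (h0 : Module.rank k (gSub f p (i + m)) = 0) :
    Module.rank k (gSub f p i) = ∑ l ∈ Finset.range m, Module.rank k (Qmod f p (i + l + 1)) := by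
  induction m generalizing i with
  | zero => simpa using h0
  | succ m ih =>
    rw [rank_gSub, Finset.sum_range_succ', ih (i + 1) (by rwa [show i + 1 + m = i + (m + 1) by ring]), add_comm]
    congr 1
    refine Finset.sum_congr rfl fun l _ => ?_
    rw [show i + 1 + l + 1 = i + (l + 1) + 1 by ring]

theorem rank_kerP_sum (f : Module.End k V) (p : k[X]) (n : ℕ) :
    Module.rank k (kerP f p n) = ∑ l ∈ Finset.range n, Module.rank k (gSub f p l) := by
  induction n with
  | zero =>
    have : kerP f p 0 = ⊥ := by
      ext x
      simp [mem_kerP]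
    rw [this]
    simp
  | succ m ih => rw [rank_kerP_succ, ih, Finset.sum_range_succ, add_comm]

theorem rank_kerP_main (f : Module.End k V) (p : k[X]) (hp : Irreducible p) (n : ℕ)
    (h0 : kerP f p (n + 1) ≤ kerP f p n) :
    Module.rank k (kerP f p n) = ∑ i ∈ Finset.Icc 1 n,
      (i : Cardinal.{v}) * (p.natDegree : Cardinal.{v}) * nu f p i := by
  have hg : gSub f p n = ⊥ := by
    rw [eq_bot_iff]
    intro x hx
    obtain ⟨y, hy, rfl⟩ := (mem_gSub ..).mp hx
    exact (mem_kerP ..).mp (h0 ((mem_kerP ..).mpr hy))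
  have hr : Module.rank k (gSub f p n) = 0 := by rw [hg]; simp
  -- downward formula
  have key : ∀ l ≤ n, Module.rank k (gSub f p l) =
      ∑ i ∈ Finset.Ico l n, Module.rank k (Qmod f p (i + 1)) := by
    intro l hl
    rw [rank_gSub_sum f p l (n - l) (by rwa [Nat.add_sub_cancel' hl]), Finset.sum_Ico_eq_sum_range]
  rw [rank_kerP_sum, Finset.sum_congr rfl
    (fun l hl => key l (Finset.mem_range.mp hl).le)]
  have hcomm : ∑ l ∈ Finset.range n, ∑ i ∈ Finset.Ico l n, Module.rank k (Qmod f p (i + 1)) =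
      ∑ i ∈ Finset.range n, ∑ l ∈ Finset.range (i + 1), Module.rank k (Qmod f p (i + 1)) :=
    Finset.sum_comm' (by intro x y; simp only [Finset.mem_range, Finset.mem_Ico]; omega)
  rw [hcomm, Finset.range_eq_Ico, Finset.sum_Ico_add'
    (fun i => ∑ l ∈ Finset.range i, Module.rank k (Qmod f p i)) 0 n 1]
  refine Finset.sum_congr (by ext; simp only [Finset.mem_Ico, Finset.mem_Icc]; omega) fun i _ => ?_
  rw [Finset.sum_const, Finset.card_range, nsmul_eq_mul, rank_Qmod f p hp, mul_assoc]

end Helpers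

/-- Let `V` be an arbitrary `k`-vector space and `f` an endomorphism of `V`
admitting an annihilating polynomial, with annihilator
`a_f(x) = p_1(x)^{n_1} ⋯ p_r(x)^{n_r}`, the `p_j(x)` being distinct monic irreducible
polynomials with `deg p_j = d_j`.  Then, as cardinals,
`dim_k V = Σ_{j=1}^{r} Σ_{i=1}^{n_j} i · d_j · ν_i(V, p_j(f))`. -/
theorem stmt_11 {k : Type u} [Field k] {V : Type v} [AddCommGroup V] [Module k V]
    (f : Module.End k V) (hf : ∃ q : k[X], q ≠ 0 ∧ aeval f q = 0)
    (r : ℕ) (p : Fin r → k[X]) (n : Fin r → ℕ)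
    (hmonic : ∀ j, (p j).Monic) (hirr : ∀ j, Irreducible (p j))
    (hdist : ∀ j j', j ≠ j' → p j ≠ p j')
    (hmin : minpoly k f = ∏ j, p j ^ n j) :
    Module.rank k V = ∑ j : Fin r, ∑ i ∈ Finset.Icc 1 (n j),
      (i : Cardinal.{v}) * ((p j).natDegree : Cardinal.{v}) * nu f (p j) i := by
  have hcop : ∀ j j', j ≠ j' → IsCoprime (p j) (p j') := fun j j' h =>
    (hirr j).coprime_iff_not_dvd.mpr fun hd => hdist j j' h
      (eq_of_monic_of_associated (hmonic j) (hmonic j')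
        ((hirr j).associated_of_dvd (hirr j') hd))
  have htor : Module.IsTorsionBy k[X] (Module.AEval' f) (∏ j, p j ^ n j) := by
    intro x
    rw [← hmin]
    apply (Module.AEval'.of f).symm.injective
    change aeval f (minpoly k f) • ((Module.AEval'.of f).symm x) = _
    rw [minpoly.aeval, zero_smul, map_zero]
  have hstep : ∀ j, Module.rank k (kerP f (p j) (n j)) = ∑ i ∈ Finset.Icc 1 (n j),
      (i : Cardinal.{v}) * ((p j).natDegree : Cardinal.{v}) * nu f (p j) i := by
    intro j
    refine rank_kerP_main f (p j) (hirr j) (n j) ?_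
    intro x hx
    rw [mem_kerP] at *
    have hc : IsCoprime (p j) (∏ l ∈ Finset.univ.erase j, p l ^ n l) :=
      IsCoprime.prod_right fun l hl => (hcop j l (Finset.ne_of_mem_erase hl).symm).pow_right
    obtain ⟨a, b, hab⟩ := hc
    have h2 : (∏ l ∈ Finset.univ.erase j, p l ^ n l) • (p j ^ n j • x) = 0 := by
      rw [← mul_smul, Finset.prod_erase_mul _ _ (Finset.mem_univ j)]
      exact @htor x
    have h1 : p j • (p j ^ n j • x) = 0 := by rw [← mul_smul, ← pow_succ', hx]
    rw [← one_smul k[X] (p j ^ n j • x), ← hab, add_smul, mul_smul, mul_smul, h1, h2]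
    simp
  have hint := Submodule.torsionBy_isInternal (S := Finset.univ) (q := fun j => p j ^ n j)
    (fun j _ j' _ h => (hcop j j' h).pow) htor
  let e := LinearEquiv.ofBijective (DirectSum.coeLinearMap
    fun i : (Finset.univ : Finset (Fin r)) => kerP f (p i) (n i)) hint
  have he : Module.rank k V = Module.rank k (DirectSum _
    fun i : (Finset.univ : Finset (Fin r)) => kerP f (p i) (n i)) :=
    (Module.AEval'.of f).rank_eq.trans (e.restrictScalars k).rank_eq.symm
  have he2 : Module.rank k (∀ i : (Finset.univ : Finset (Fin r)), kerP f (p i) (n i)) =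
      Module.rank k (∀ j : Fin r, kerP f (p j) (n j)) :=
    (LinearEquiv.piCongrLeft k (fun j : Fin r => kerP f (p j) (n j))
      (Equiv.subtypeUnivEquiv Finset.mem_univ)).rank_eq
  rw [he, (DirectSum.linearEquivFunOnFintype k _ _).rank_eq, he2, rank_pi_fin_aux]
  exact Finset.sum_congr rfl fun j _ => hstep j
end

section
/- Let V be a k-vector space of countably infinite dimension. Let p_1(x), …, p_r(x) be distinct monic irreducible polynomials in k[x], let n_1, …, n_r ≥ 1 be natural numbers, and for each 1 ≤ j ≤ r and 1 ≤ i ≤ n_j let ν_{ji} be a cardinal belonging to {0} ∪ ℕ ∪ {ℵ₀}, such that ν_{j n_j} ≠ 0 for every j and ν_{ji} = ℵ₀ for at least one pair (j,i). Then there exists an endomorphism f of V with annihilator polynomial a_f(x) = p_1(x)^{n_1} ⋯ p_r(x)^{n_r} and with ν_i(V, p_j(f)) = ν_{ji} for all 1 ≤ j ≤ r and 1 ≤ i ≤ n_j. -/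
open Polynomial Module

universe u v w

open DirectSum

section Helpers

variable {R : Type u} [CommRing R]

/-- general version of wSub -/
def genW (M : Type*) [AddCommGroup M] [Module R M] (p : R) (i : ℕ) : Submodule R M :=
  Submodule.torsionBy R M (p ^ (i - 1)) ⊔
    (Submodule.torsionBy R M (p ^ (i + 1))).map (LinearMap.lsmul R M p)

theorem mem_genW {M : Type*} [AddCommGroup M] [Module R M] {p : R} {i : ℕ} {x : M} :
    x ∈ genW M p i ↔ ∃ y z : M, p ^ (i - 1) • y = 0 ∧ p ^ (i + 1) • z = 0 ∧ y + p • z = x := by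
  unfold genW
  rw [Submodule.mem_sup]
  constructor
  · rintro ⟨y, hy, _, ⟨z, hz, rfl⟩, rfl⟩
    exact ⟨y, z, by simpa using hy, by simpa using hz, rfl⟩
  · rintro ⟨y, z, hy, hz, rfl⟩
    exact ⟨y, by simpa using hy, p • z, ⟨z, by simpa using hz, rfl⟩, rfl⟩

theorem genW_map {M N : Type*} [AddCommGroup M] [Module R M] [AddCommGroup N] [Module R N]
    (g : M →ₗ[R] N) {p : R} {i : ℕ} {x : M} (hx : x ∈ genW M p i) : g x ∈ genW N p i := by
  rw [mem_genW] at hx ⊢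
  obtain ⟨y, z, hy, hz, rfl⟩ := hx
  exact ⟨g y, g z, by rw [← map_smul, hy, map_zero], by rw [← map_smul, hz, map_zero], by simp⟩

theorem comp_mem_genW [IsDomain R] {p : R} (hp : Prime p) (m i : ℕ) (hi : 1 ≤ i)
    (x : R ⧸ Ideal.span {p ^ m}) (hx : p ^ i • x = 0)
    (h : m ≠ i ∨ ∃ y, x = p • y) : x ∈ genW (R ⧸ Ideal.span {p ^ m}) p i := by
  rw [mem_genW]
  have key : ∀ (t : ℕ), m ≤ t → ∀ y : R ⧸ Ideal.span {p ^ m}, p ^ t • y = 0 := by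
    intro t ht y
    obtain ⟨y, rfl⟩ := Ideal.Quotient.mk_surjective y
    rw [← Ideal.Quotient.mk_eq_mk, ← Submodule.Quotient.mk_smul, Submodule.Quotient.mk_eq_zero,
      Ideal.mem_span_singleton, smul_eq_mul]
    exact Dvd.dvd.mul_right (pow_dvd_pow _ ht) _
  rcases lt_trichotomy m i with hlt | heq | hgt
  · exact ⟨x, 0, key _ (by omega) _, by simp, by simp⟩
  · obtain ⟨y, rfl⟩ := h.resolve_left (by simp [heq])
    exact ⟨0, y, by simp, key _ (by omega) _, by simp⟩
  · obtain ⟨x, rfl⟩ := Ideal.Quotient.mk_surjective x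
    rw [← Ideal.Quotient.mk_eq_mk, ← Submodule.Quotient.mk_smul, Submodule.Quotient.mk_eq_zero,
      Ideal.mem_span_singleton, smul_eq_mul] at hx
    obtain ⟨d, rfl⟩ : ∃ d, m = i + (d + 1) := ⟨m - i - 1, by omega⟩
    rw [pow_add p i, mul_dvd_mul_iff_left (pow_ne_zero _ hp.ne_zero)] at hx
    obtain ⟨c, rfl⟩ := hx
    refine ⟨0, Ideal.Quotient.mk _ (p ^ d * c), by simp, ?_, ?_⟩
    · rw [← Ideal.Quotient.mk_eq_mk, ← Submodule.Quotient.mk_smul, Submodule.Quotient.mk_eq_zero,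
        Ideal.mem_span_singleton, smul_eq_mul]
      exact ⟨c, by ring⟩
    · rw [zero_add, ← Ideal.Quotient.mk_eq_mk, ← Submodule.Quotient.mk_smul, smul_eq_mul,
        ← Ideal.Quotient.mk_eq_mk]
      congr 1
      ring

theorem comp_mem_genW' [IsDomain R] {p q : R} (hp : Prime p) (m i : ℕ) (hi : 1 ≤ i)
    (hq : q = p ^ m) (x : R ⧸ Ideal.span {q}) (hx : p ^ i • x = 0)
    (h : m ≠ i ∨ ∃ y, x = p • y) : x ∈ genW (R ⧸ Ideal.span {q}) p i := by
  subst hq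
  exact comp_mem_genW hp m i hi x hx h

theorem comp_zero {p q : R} (hpq : IsCoprime p q) (i : ℕ)
    (x : R ⧸ Ideal.span {q}) (hx : p ^ i • x = 0) : x = 0 := by
  obtain ⟨x, rfl⟩ := Ideal.Quotient.mk_surjective x
  rw [← Ideal.Quotient.mk_eq_mk, ← Submodule.Quotient.mk_smul, Submodule.Quotient.mk_eq_zero,
      Ideal.mem_span_singleton, smul_eq_mul] at hx
  rw [← Ideal.Quotient.mk_eq_mk, Submodule.Quotient.mk_eq_zero, Ideal.mem_span_singleton]
  exact (hpq.pow_left (m := i)).symm.dvd_of_dvd_mul_left hx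

variable {ι : Type w} [DecidableEq ι] (q : ι → R) (p : R) (T : Set ι)

open Classical in
/-- projection onto the T-components, mod p -/
noncomputable def phiT (hT : ∀ a ∈ T, p ∣ q a) :
    (⨁ a, R ⧸ Ideal.span {q a}) →ₗ[R] (T →₀ (R ⧸ Ideal.span {p})) :=
  DirectSum.toModule R ι _ fun a =>
    if h : a ∈ T then
      (Finsupp.lsingle (R := R) (⟨a, h⟩ : T)) ∘ₗ
        Submodule.factor (Ideal.span_singleton_le_span_singleton.mpr (hT a h))
    else 0

theorem phiT_apply (hT : ∀ a ∈ T, p ∣ q a) (x : ⨁ a, R ⧸ Ideal.span {q a}) (a : ι) (h : a ∈ T) :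
    phiT q p T hT x ⟨a, h⟩ =
      Submodule.factor (Ideal.span_singleton_le_span_singleton.mpr (hT a h)) (x a) := by
  induction x using DirectSum.induction_on with
  | zero => simp
  | add x y hx hy => simp [hx, hy]
  | of b y =>
    rw [phiT, ← DirectSum.lof_eq_of R, DirectSum.toModule_lof]
    by_cases hab : b = a
    · subst hab
      simp [h, DirectSum.lof_apply]
    · rw [DirectSum.lof_eq_of, DirectSum.of_eq_of_ne _ _ _ (Ne.symm hab)]
      split_ifs with hb
      · simp [hab]
      · simp

theorem phiT_lof (hT : ∀ a ∈ T, p ∣ q a) (a : ι) (h : a ∈ T) (c : R) :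
    phiT q p T hT (DirectSum.lof R ι (fun a => R ⧸ Ideal.span {q a}) a (Ideal.Quotient.mk _ c)) =
      Finsupp.single ⟨a, h⟩ (Ideal.Quotient.mk _ c) := by
  rw [phiT, DirectSum.toModule_lof]
  simp [h]

theorem phiT_eq_zero_iff [IsDomain R] (hp : Prime p) (i : ℕ) (hi : 1 ≤ i)
    (hT' : ∀ a ∈ T, q a = p ^ i)
    (hTc : ∀ a ∉ T, IsCoprime p (q a) ∨ ∃ m, m ≠ i ∧ q a = p ^ m)
    (hT : ∀ a ∈ T, p ∣ q a) (x : ⨁ a, R ⧸ Ideal.span {q a}) (hx : p ^ i • x = 0) :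
    phiT q p T hT x = 0 ↔ x ∈ genW (⨁ a, R ⧸ Ideal.span {q a}) p i := by
  classical
  have hxa : ∀ a, p ^ i • x a = 0 := fun a => by
    rw [← DirectSum.smul_apply, hx]; rfl
  constructor
  · intro h0
    rw [← DirectSum.sum_support_of x]
    refine Submodule.sum_mem _ fun a _ => ?_
    rw [← DirectSum.lof_eq_of R]
    apply genW_map
    have ha := hxa a
    by_cases h : a ∈ T
    · have h1 := phiT_apply q p T hT x a h
      rw [h0] at h1
      have h2 : ∃ y, x a = p • y := by
        obtain ⟨c, hc⟩ := Ideal.Quotient.mk_surjective (x a)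
        rw [← hc, ← Ideal.Quotient.mk_eq_mk] at h1
        have h3 : (Submodule.Quotient.mk c : R ⧸ Ideal.span {p}) = 0 := h1.symm
        rw [Submodule.Quotient.mk_eq_zero, Ideal.mem_span_singleton] at h3
        obtain ⟨d, rfl⟩ := h3
        exact ⟨Ideal.Quotient.mk _ d, hc.symm⟩
      exact comp_mem_genW' hp i i hi (hT' a h) _ ha (Or.inr h2)
    · rcases hTc a h with hc | ⟨m, hm, hqm⟩
      · rw [comp_zero hc i _ ha]; exact zero_mem _
      · exact comp_mem_genW' hp m i hi hqm _ ha (Or.inl hm)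
  · rw [mem_genW]
    rintro ⟨y, z, hy, hz, rfl⟩
    ext ⟨a, h⟩
    rw [phiT_apply, Finsupp.zero_apply]
    have hya : p ^ (i - 1) • y a = 0 := by
      rw [← DirectSum.smul_apply, hy]; rfl
    rw [DirectSum.add_apply, DirectSum.smul_apply, map_add, map_smul]
    have h2 : p • (Submodule.factor (Ideal.span_singleton_le_span_singleton.mpr (hT a h))) (z a)
        = 0 := by
      generalize (Submodule.factor (Ideal.span_singleton_le_span_singleton.mpr (hT a h))) (z a) = w
      obtain ⟨w, rfl⟩ := Ideal.Quotient.mk_surjective w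
      rw [← Ideal.Quotient.mk_eq_mk, ← Submodule.Quotient.mk_smul, Submodule.Quotient.mk_eq_zero,
        Ideal.mem_span_singleton, smul_eq_mul]
      exact dvd_mul_right _ _
    rw [h2, add_zero]
    obtain ⟨c, hc⟩ := Ideal.Quotient.mk_surjective (y a)
    rw [← hc, ← Ideal.Quotient.mk_eq_mk] at hya ⊢
    rw [← Submodule.Quotient.mk_smul, Submodule.Quotient.mk_eq_zero,
        Ideal.mem_span_singleton, smul_eq_mul, hT' a h] at hya
    obtain ⟨d, rfl⟩ : ∃ d, i = d + 1 := ⟨i - 1, by omega⟩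
    rw [pow_succ, Nat.add_sub_cancel, mul_dvd_mul_iff_left (pow_ne_zero _ hp.ne_zero)] at hya
    change (Submodule.Quotient.mk c : R ⧸ Ideal.span {p}) = 0
    rwa [Submodule.Quotient.mk_eq_zero, Ideal.mem_span_singleton]

end Helpers

section Core
variable {k : Type u} [Field k] {V : Type v} [AddCommGroup V] [Module k V]

theorem nu_eq_card {ι : Type v} [DecidableEq ι] (q : ι → k[X]) (p : k[X]) (T : Set ι)
    (f : Module.End k V) (e : Module.AEval' f ≃ₗ[k[X]] (⨁ a, k[X] ⧸ Ideal.span {q a}))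
    (hp : Irreducible p) (i : ℕ) (hi : 1 ≤ i)
    (hT' : ∀ a ∈ T, q a = p ^ i)
    (hTc : ∀ a ∉ T, IsCoprime p (q a) ∨ ∃ m, m ≠ i ∧ q a = p ^ m) :
    nu f p i = Cardinal.mk T := by
  have hT : ∀ a ∈ T, p ∣ q a := fun a h => by
    rw [hT' a h]; exact dvd_pow_self _ (by omega)
  let ψ : kerP f p i →ₗ[k[X]] (T →₀ (k[X] ⧸ Ideal.span {p})) :=
    (phiT q p T hT) ∘ₗ e.toLinearMap ∘ₗ (kerP f p i).subtype
  have hker : LinearMap.ker ψ = (wSub f p i).comap (kerP f p i).subtype := by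
    ext ⟨x, hx⟩
    rw [LinearMap.mem_ker, Submodule.mem_comap]
    have hx' : p ^ i • e x = 0 := by
      rw [← map_smul, (Submodule.mem_torsionBy_iff _ _).mp hx, map_zero]
    refine (phiT_eq_zero_iff q p T hp.prime i hi hT' hTc hT (e x) hx').trans ?_
    change _ ↔ x ∈ genW (Module.AEval' f) p i
    constructor
    · intro h
      simpa using genW_map e.symm.toLinearMap h
    · intro h
      simpa using genW_map (N := ⨁ a, k[X] ⧸ Ideal.span {q a}) e.toLinearMap h
  have hsurj : LinearMap.range ψ = ⊤ := by
    rw [eq_top_iff]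
    rintro y -
    induction y using Finsupp.induction_linear with
    | zero => exact zero_mem _
    | add a b ha hb => exact add_mem ha hb
    | single a c =>
      obtain ⟨a, h⟩ := a
      obtain ⟨c, rfl⟩ := Ideal.Quotient.mk_surjective c
      let z := DirectSum.lof k[X] ι (fun a => k[X] ⧸ Ideal.span {q a}) a (Ideal.Quotient.mk _ c)
      have hz : p ^ i • z = 0 := by
        rw [← map_smul, ← Ideal.Quotient.mk_eq_mk, ← Submodule.Quotient.mk_smul,
          (Submodule.Quotient.mk_eq_zero _).mpr, map_zero]
        rw [Ideal.mem_span_singleton, smul_eq_mul, hT' a h]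
        exact dvd_mul_right _ _
      refine ⟨⟨e.symm z, ?_⟩, ?_⟩
      · rw [kerP, Submodule.mem_torsionBy_iff, ← map_smul, hz, map_zero]
      · change phiT q p T hT (e (e.symm z)) = _
        rw [e.apply_symm_apply]
        exact phiT_lof q p T hT a h c
  let E : Qmod f p i ≃ₗ[k[X]] (T →₀ (k[X] ⧸ Ideal.span {p})) :=
    (Submodule.quotEquivOfEq _ _ hker.symm).trans
      (ψ.quotKerEquivOfSurjective (LinearMap.range_eq_top.mp hsurj))
  let E' : Qmod f p i ≃ₗ[k[X] ⧸ Ideal.span {p}] (T →₀ (k[X] ⧸ Ideal.span {p})) :=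
    { E with
      map_smul' := by
        intro c x
        obtain ⟨c, rfl⟩ := Ideal.Quotient.mk_surjective c
        exact E.map_smul c x }
  have : (Ideal.span {p}).IsMaximal := PrincipalIdealRing.isMaximal_of_irreducible hp
  let b : Basis T (k[X] ⧸ Ideal.span {p}) (Qmod f p i) := Basis.ofRepr E'
  rw [nu, ← b.mk_eq_rank'']


theorem exists_model (hdim : Module.rank k V = Cardinal.aleph0) {ι : Type v} [DecidableEq ι]
    [Countable ι] [Infinite ι] (q : ι → k[X]) (hq : ∀ a, (q a).Monic) (hq' : ∀ a, ¬ IsUnit (q a)) :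
    ∃ f : Module.End k V,
      Nonempty (Module.AEval' f ≃ₗ[k[X]] (⨁ a, k[X] ⧸ Ideal.span {q a})) := by
  classical
  have hfin : ∀ a, Module.Finite k (k[X] ⧸ Ideal.span {q a}) := fun a => (hq a).finite_quotient
  have hnt : ∀ a, Nontrivial (k[X] ⧸ Ideal.span {q a}) := fun a => by
    rw [Ideal.Quotient.nontrivial_iff, Ne, Ideal.span_singleton_eq_top]
    exact hq' a
  let b := fun a => Module.Free.chooseBasis k (k[X] ⧸ Ideal.span {q a})
  have hne : ∀ a, Nonempty (Module.Free.ChooseBasisIndex k (k[X] ⧸ Ideal.span {q a})) :=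
    fun a => (b a).index_nonempty
  let B : Basis (Σ a, Module.Free.ChooseBasisIndex k (k[X] ⧸ Ideal.span {q a})) k
    (⨁ a, k[X] ⧸ Ideal.span {q a}) := DFinsupp.basis b
  let bV := Module.Free.chooseBasis k V
  have hc : Cardinal.mk (Module.Free.ChooseBasisIndex k V) = Cardinal.aleph0 := by
    rw [bV.mk_eq_rank'', hdim]
  obtain ⟨_⟩ := Cardinal.denumerable_iff.mpr hc
  have : Infinite (Σ a, Module.Free.ChooseBasisIndex k (k[X] ⧸ Ideal.span {q a})) :=
    Infinite.of_surjective Sigma.fst fun a => ⟨⟨a, (hne a).some⟩, rfl⟩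
  obtain ⟨eq⟩ := nonempty_equiv_of_countable
    (α := Module.Free.ChooseBasisIndex k V)
    (β := Σ a, Module.Free.ChooseBasisIndex k (k[X] ⧸ Ideal.span {q a}))
  let e : V ≃ₗ[k] (⨁ a, k[X] ⧸ Ideal.span {q a}) := bV.equiv B eq
  let g : Module.End k (⨁ a, k[X] ⧸ Ideal.span {q a}) := Algebra.lsmul k k _ (X : k[X])
  refine ⟨e.symm.toLinearMap ∘ₗ g ∘ₗ e.toLinearMap, ⟨LinearEquiv.ofAEval _ e ?_⟩⟩
  intro m
  change e (e.symm (g (e m))) = _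
  rw [e.apply_symm_apply]
  rfl

theorem minpoly_model {ι : Type v} [DecidableEq ι] (q : ι → k[X]) (Q : k[X]) (hQ : Q.Monic)
    (f : Module.End k V) (e : Module.AEval' f ≃ₗ[k[X]] (⨁ a, k[X] ⧸ Ideal.span {q a}))
    (h1 : ∀ a, q a ∣ Q) (h2 : ∀ P : k[X], (∀ a, q a ∣ P) → Q ∣ P) :
    minpoly k f = Q := by
  have key : ∀ P : k[X], aeval f P = 0 ↔ ∀ a, q a ∣ P := by
    intro P
    rw [← RingHom.mem_ker, ← Module.AEval.annihilator_eq_ker_aeval (M := V), e.annihilator_eq,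
      Module.mem_annihilator]
    constructor
    · intro h a
      have h3 := h (DirectSum.lof k[X] ι (fun a => k[X] ⧸ Ideal.span {q a}) a
        (Submodule.Quotient.mk 1))
      rw [← map_smul] at h3
      have h4 := (DFinsupp.single_injective (β := fun a => k[X] ⧸ Ideal.span {q a}) (i := a)) (h3.trans (DFinsupp.single_zero a).symm)
      rw [← Submodule.Quotient.mk_smul, Submodule.Quotient.mk_eq_zero,
        Ideal.mem_span_singleton, smul_eq_mul, mul_one] at h4
      exact h4
    · intro h x
      ext a
      rw [DirectSum.smul_apply]
      obtain ⟨c, hc⟩ := Ideal.Quotient.mk_surjective (x a)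
      rw [← hc, ← Ideal.Quotient.mk_eq_mk, ← Submodule.Quotient.mk_smul]
      refine (Submodule.Quotient.mk_eq_zero _).mpr ?_
      rw [Ideal.mem_span_singleton, smul_eq_mul]
      exact (h a).mul_right _
  have hQ0 : aeval f Q = 0 := (key Q).mpr h1
  refine Polynomial.eq_of_monic_of_associated (minpoly.monic ⟨Q, hQ, hQ0⟩) hQ
    (associated_of_dvd_dvd (minpoly.dvd k f hQ0) (h2 _ ((key _).mp (minpoly.aeval k f))))

end Core


/-- Let `V` be a `k`-vector space of countably infinite dimension.  Let
`p_1(x), …, p_r(x)` be distinct monic irreducible polynomials in `k[x]`, let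
`n_1, …, n_r ≥ 1` be natural numbers, and for each `1 ≤ j ≤ r` and `1 ≤ i ≤ n_j` let `ν j i`
be a cardinal belonging to `{0} ∪ ℕ ∪ {ℵ₀}` (i.e. `ν j i ≤ ℵ₀`), such that `ν j (n j) ≠ 0`
for every `j` and `ν j i = ℵ₀` for at least one pair `(j, i)`.  Then there exists an
endomorphism `f` of `V` with annihilator polynomial `a_f(x) = p_1(x)^{n_1} ⋯ p_r(x)^{n_r}`
and with `ν_i(V, p_j(f)) = ν j i` for all `1 ≤ j ≤ r` and `1 ≤ i ≤ n_j`. -/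
theorem stmt_12 {k : Type u} [Field k] {V : Type v} [AddCommGroup V] [Module k V]
    (hdim : Module.rank k V = Cardinal.aleph0)
    (r : ℕ) (p : Fin r → k[X]) (n : Fin r → ℕ)
    (hmonic : ∀ j, (p j).Monic) (hirr : ∀ j, Irreducible (p j))
    (hdist : ∀ j j', j ≠ j' → p j ≠ p j')
    (hn : ∀ j, 1 ≤ n j)
    (ν : Fin r → ℕ → Cardinal.{v})
    (hν : ∀ j i, 1 ≤ i → i ≤ n j → ν j i ≤ Cardinal.aleph0)
    (hlast : ∀ j, ν j (n j) ≠ 0)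
    (hinf : ∃ j i, 1 ≤ i ∧ i ≤ n j ∧ ν j i = Cardinal.aleph0) :
    ∃ f : Module.End k V, minpoly k f = ∏ j, p j ^ n j ∧
      ∀ j, ∀ i, 1 ≤ i → i ≤ n j → nu f (p j) i = ν j i := by
  classical
  let ι : Type v := Σ j : Fin r, Σ i : Fin (n j), (ν j (i + 1)).out
  let q : ι → k[X] := fun a => p a.1 ^ ((a.2.1 : ℕ) + 1)
  have hcop : ∀ j j', j ≠ j' → IsCoprime (p j) (p j') := by
    intro j j' h
    rw [(hirr j).coprime_iff_not_dvd]
    intro hd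
    exact hdist j j' h (Polynomial.eq_of_monic_of_associated (hmonic j) (hmonic j')
      ((hirr j).associated_of_dvd (hirr j') hd))
  have hctb : ∀ j (i : Fin (n j)), Countable (ν j (i + 1)).out := by
    intro j i
    rw [← Cardinal.mk_le_aleph0_iff, Cardinal.mk_out]
    exact hν j _ (by omega) (by omega)
  have : Countable ι := inferInstance
  have : Infinite ι := by
    obtain ⟨j, i, hi1, hi2, hi⟩ := hinf
    obtain ⟨i, rfl⟩ : ∃ i', i = i' + 1 := ⟨i - 1, by omega⟩
    have : Infinite (ν j (i + 1)).out := by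
      rw [Cardinal.infinite_iff, Cardinal.mk_out, hi]
    refine Infinite.of_injective
      (fun s : (ν j (i + 1)).out => (⟨j, ⟨i, by omega⟩, s⟩ : ι)) ?_
    intro s t hst
    cases hst
    rfl
  obtain ⟨f, ⟨e⟩⟩ := exists_model (V := V) hdim q (fun a => (hmonic _).pow _)
    (fun a h => (hirr a.1).not_isUnit ((isUnit_pow_iff (by omega)).mp h))
  refine ⟨f, ?_, ?_⟩
  · refine minpoly_model q _ (monic_prod_of_monic _ _ fun j _ => (hmonic j).pow _) f e ?_ ?_
    · intro a
      refine (pow_dvd_pow (p a.1) ?_).trans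
        (Finset.dvd_prod_of_mem (fun j => p j ^ n j) (Finset.mem_univ a.1))
      have := a.2.1.2
      omega
    · intro P hP
      refine Finset.prod_dvd_of_coprime ?_ ?_
      · intro j _ j' _ h
        exact (hcop j j' h).pow
      · intro j _
        obtain ⟨m, hm⟩ : ∃ m, n j = m + 1 := ⟨n j - 1, by have := hn j; omega⟩
        have h0 := hlast j
        rw [hm] at h0
        have : Nonempty (ν j (m + 1)).out := by
          rw [← Cardinal.mk_ne_zero_iff, Cardinal.mk_out]; exact h0
        rw [hm]
        exact hP ⟨j, ⟨m, by omega⟩, this.some⟩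
  · intro j i hi1 hi2
    obtain ⟨i, rfl⟩ : ∃ i', i = i' + 1 := ⟨i - 1, by omega⟩
    let s : (ν j (i + 1)).out → ι := fun s => ⟨j, ⟨i, by omega⟩, s⟩
    have hs : Function.Injective s := by
      intro x y hxy
      cases hxy
      rfl
    rw [nu_eq_card q (p j) (Set.range s) f e (hirr j) (i + 1) hi1 ?_ ?_]
    · rw [Cardinal.mk_range_eq s hs, Cardinal.mk_out]
    · rintro _ ⟨x, rfl⟩
      rfl
    · rintro ⟨j', ⟨i', hi'⟩, x⟩ ha
      by_cases h : j = j'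
      · subst h
        right
        refine ⟨i' + 1, ?_, rfl⟩
        intro h
        obtain rfl : i' = i := by omega
        exact ha ⟨x, rfl⟩
      · left
        exact (hcop j j' h).pow_right
end
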